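/- arXiv:1505.04751 — 7 statements merged into one kernel-verified Lean document; each statement's English description precedes it below -/
import Mathlib

section
/- Let ψ ∈ [0,∞)^V satisfy Σ_{w∈V} B_{vw} ψ_w ≤ ψ_v for all v ∈ V. Then there exist unique vectors h, k ∈ [0,∞)^V such that h is B-harmonic and ψ_v = h_v + Σ_{n=0}^∞ Σ_{w∈V} (Bⁿ)_{vw} k_w for all v ∈ V (in particular this series converges). Moreover k is given by k_v = ψ_v − Σ_{w∈V} B_{vw} ψ_w, and h is given by h_v = lim_{n→∞} Σ_{w∈V} (Bⁿ)_{vw} ψ_w. -/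
open Filter Finset

/-- The spectral radius of a real matrix, `ρ(M) = lim_n ‖Mⁿ‖^{1/n}`
(computed with the entrywise ℓ¹-norm, and as a `limsup` so that it is always defined;
it is `0` for the matrix over the empty index type). -/
noncomputable def specRad {n : Type*} [Fintype n] [DecidableEq n] (M : Matrix n n ℝ) : ℝ :=
  Filter.limsup (fun k : ℕ => (∑ i, ∑ j, |(M ^ k) i j|) ^ ((1 : ℝ) / (k : ℝ))) Filter.atTop

/-- The spectral radius `ρ(B^S)` of the submatrix of `B` obtained by restricting to `S × S`. -/
noncomputable def specRadOn {V : Type*} [Fintype V] (B : Matrix V V ℝ) (S : Set V) : ℝ :=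
  letI : Fintype S := (Set.toFinite S).fintype
  letI : DecidableEq S := Classical.decEq _
  specRad (fun i j : S => B i.1 j.1)

variable {V : Type*} [Fintype V]

/-- A vertex `s` is a sink for `B` when the row of `B` at `s` vanishes. -/
def IsSink (B : Matrix V V ℝ) (s : V) : Prop := ∀ w, B s w = 0

/-- `ψ` is `B`-harmonic: `Σ_w B v w * ψ w = ψ v` for all `v`. -/
def IsHarmonic (B : Matrix V V ℝ) (ψ : V → ℝ) : Prop :=
  ∀ v, ∑ w, B v w * ψ w = ψ v

/-- `ψ` is almost `B`-harmonic: `Σ_w B v w * ψ w = ψ v` for all `v` that are not sinks. -/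
def IsAlmostHarmonic (B : Matrix V V ℝ) (ψ : V → ℝ) : Prop :=
  ∀ v, ¬ IsSink B v → ∑ w, B v w * ψ w = ψ v

/-- A sink `s` is `B`-summable when `Σ_n (Bⁿ)_{v s} < ∞` for all `v`. -/
def IsSummableSink [DecidableEq V] (B : Matrix V V ℝ) (s : V) : Prop :=
  IsSink B s ∧ ∀ v, Summable (fun n : ℕ => (B ^ n) v s)

/-- The vector `φ^s` associated to a `B`-summable sink `s`. -/
noncomputable def phiSink [DecidableEq V] (B : Matrix V V ℝ) (s : V) : V → ℝ :=
  fun v => (∑' n : ℕ, (B ^ n) v s) / (∑ w, ∑' n : ℕ, (B ^ n) w s)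

/-- `v ⤳ w`: `(Bⁿ)_{vw} > 0` for some `n ≥ 0`. -/
def Reaches [DecidableEq V] (B : Matrix V V ℝ) (v w : V) : Prop :=
  ∃ n : ℕ, 0 < (B ^ n) v w

/-- The closure of a set of vertices: all vertices that reach it. -/
def closureSet [DecidableEq V] (B : Matrix V V ℝ) (F : Set V) : Set V :=
  {v | ∃ w ∈ F, Reaches B v w}

/-- A component: an equivalence class of `∼` on which `B` is nonzero. -/
def IsComponent [DecidableEq V] (B : Matrix V V ℝ) (C : Set V) : Prop :=
  (∃ v, C = {w | Reaches B v w ∧ Reaches B w v}) ∧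
  ∃ v ∈ C, ∃ w ∈ C, B v w ≠ 0

/-- A `B`-harmonic component. -/
def IsHarmonicComponent [DecidableEq V] (B : Matrix V V ℝ) (C : Set V) : Prop :=
  IsComponent B C ∧ specRadOn B C = 1 ∧
  ((closureSet B C \ C).Nonempty → specRadOn B (closureSet B C \ C) < 1)

/-- The property characterizing the vector `φ^C` of a `B`-harmonic component `C`. -/
def IsPhiC [DecidableEq V] (B : Matrix V V ℝ) (C : Set V) (φ : V → ℝ) : Prop :=
  (∀ v, 0 ≤ φ v) ∧ (∑ v, φ v = 1) ∧ IsHarmonic B φ ∧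
  (∀ v ∈ C, ∑ w, Set.indicator C (fun w => B v w * φ w) w = φ v) ∧
  (∀ v, φ v ≠ 0 ↔ v ∈ closureSet B C)

open scoped Classical in
/-- The vector `φ^C` of a `B`-harmonic component `C` (defined by choice; for a `B`-harmonic
component it is unique). -/
noncomputable def phiComp [DecidableEq V] (B : Matrix V V ℝ) (C : Set V) : V → ℝ :=
  if h : ∃ φ : V → ℝ, IsPhiC B C φ then h.choose else 0

/-- Positivity of `Bⁿ f`. -/
theorem riesz_nonneg {V : Type*} [Fintype V] [DecidableEq V] (B : Matrix V V ℝ)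
    (hB : ∀ v w, 0 ≤ B v w) (f : V → ℝ) (hf : ∀ v, 0 ≤ f v) (n : ℕ) (v : V) :
    0 ≤ ∑ w, (B ^ n) v w * f w := by
  have hp : ∀ n v w, 0 ≤ (B ^ n) v w := by
    intro n
    induction n with
    | zero =>
      intro v w
      rw [pow_zero, Matrix.one_apply]
      split_ifs <;> norm_num
    | succ n ih =>
      intro v w
      rw [pow_succ, Matrix.mul_apply]
      exact Finset.sum_nonneg fun j _ => mul_nonneg (ih v j) (hB j w)
  exact Finset.sum_nonneg fun w _ => mul_nonneg (hp n v w) (hf w)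

theorem riesz_succ_left {V : Type*} [Fintype V] [DecidableEq V] (B : Matrix V V ℝ)
    (f : V → ℝ) (n : ℕ) (v : V) :
    ∑ w, (B ^ (n + 1)) v w * f w = ∑ u, B v u * ∑ w, (B ^ n) u w * f w := by
  change ((B ^ (n + 1)).mulVec f) v = (B.mulVec ((B ^ n).mulVec f)) v
  rw [Matrix.mulVec_mulVec, pow_succ']

theorem riesz_succ_right {V : Type*} [Fintype V] [DecidableEq V] (B : Matrix V V ℝ)
    (f : V → ℝ) (n : ℕ) (v : V) :
    ∑ w, (B ^ (n + 1)) v w * f w = ∑ u, (B ^ n) v u * ∑ w, B u w * f w := by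
  change ((B ^ (n + 1)).mulVec f) v = ((B ^ n).mulVec (B.mulVec f)) v
  rw [Matrix.mulVec_mulVec, pow_succ]

theorem riesz_zero {V : Type*} [Fintype V] [DecidableEq V] (B : Matrix V V ℝ)
    (f : V → ℝ) (v : V) : ∑ w, (B ^ 0) v w * f w = f v := by
  change ((B ^ 0).mulVec f) v = f v
  rw [pow_zero, Matrix.one_mulVec]

/-- Telescoping. -/
theorem riesz_partial {V : Type*} [Fintype V] [DecidableEq V] (B : Matrix V V ℝ)
    (ψ k : V → ℝ) (hk : ∀ v, k v = ψ v - ∑ w, B v w * ψ w) (v : V) (n : ℕ) :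
    ∑ i ∈ Finset.range n, ∑ w, (B ^ i) v w * k w = ψ v - ∑ w, (B ^ n) v w * ψ w := by
  induction n with
  | zero => rw [riesz_zero]; simp
  | succ n ih =>
    rw [Finset.sum_range_succ, ih, riesz_succ_right]
    simp only [hk, mul_sub, Finset.sum_sub_distrib]
    ring

/-- The potential `G = Σ Bⁿ k` satisfies `B G = G - k`. -/
theorem riesz_potential {V : Type*} [Fintype V] [DecidableEq V] (B : Matrix V V ℝ)
    (k : V → ℝ) (hs : ∀ v, Summable (fun n : ℕ => ∑ w, (B ^ n) v w * k w)) (v : V) :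
    ∑ u, B v u * ∑' n : ℕ, ∑ w, (B ^ n) u w * k w
      = (∑' n : ℕ, ∑ w, (B ^ n) v w * k w) - k v := by
  rw [(hs v).tsum_eq_zero_add, riesz_zero, add_sub_cancel_left]
  simp only [riesz_succ_left]
  rw [Summable.tsum_finsetSum (fun u _ => (hs u).mul_left (B v u))]
  simp only [tsum_mul_left]

/-- The formulas for `k` and `h`. -/
theorem riesz_formulas {V : Type*} [Fintype V] [DecidableEq V] (B : Matrix V V ℝ)
    (ψ h k : V → ℝ) (hh : IsHarmonic B h)
    (hs : ∀ v, Summable (fun n : ℕ => ∑ w, (B ^ n) v w * k w))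
    (he : ∀ v, ψ v = h v + ∑' n : ℕ, ∑ w, (B ^ n) v w * k w) :
    (∀ v, k v = ψ v - ∑ w, B v w * ψ w) ∧
      (∀ v, Filter.Tendsto (fun n : ℕ => ∑ w, (B ^ n) v w * ψ w)
        Filter.atTop (nhds (h v))) := by
  have hk : ∀ v, k v = ψ v - ∑ w, B v w * ψ w := by
    intro v
    have h1 : ∑ w, B v w * ψ w = h v + ((∑' n : ℕ, ∑ w, (B ^ n) v w * k w) - k v) := by
      rw [← riesz_potential B k hs v, ← hh v, ← Finset.sum_add_distrib]
      refine Finset.sum_congr rfl fun w _ => ?_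
      rw [he w, mul_add]
    rw [h1, he v]; ring
  refine ⟨hk, fun v => ?_⟩
  have ht := ((hs v).hasSum.tendsto_sum_nat).const_sub (ψ v)
  have e1 : ψ v - (∑' n : ℕ, ∑ w, (B ^ n) v w * k w) = h v := by rw [he v]; ring
  rw [e1] at ht
  refine ht.congr fun n => ?_
  rw [riesz_partial B ψ k hk]; ring

/-- Riesz decomposition: if `ψ ≥ 0` and `Bψ ≤ ψ` entrywise, there are unique nonnegative
vectors `h, k` with `h` `B`-harmonic and `ψ_v = h_v + Σ_{n} Σ_w (Bⁿ)_{vw} k_w` (the series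
converging); moreover `k_v = ψ_v - Σ_w B_{vw} ψ_w` and `h_v = lim_n Σ_w (Bⁿ)_{vw} ψ_w`. -/
theorem riesz_decomposition {V : Type*} [Fintype V] [Nonempty V] [DecidableEq V]
    (B : Matrix V V ℝ) (hB : ∀ v w, 0 ≤ B v w)
    (ψ : V → ℝ) (hψ : ∀ v, 0 ≤ ψ v)
    (hsub : ∀ v, ∑ w, B v w * ψ w ≤ ψ v) :
    (∃! p : (V → ℝ) × (V → ℝ),
      (∀ v, 0 ≤ p.1 v) ∧ (∀ v, 0 ≤ p.2 v) ∧ IsHarmonic B p.1 ∧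
      (∀ v, Summable (fun n : ℕ => ∑ w, (B ^ n) v w * p.2 w)) ∧
      (∀ v, ψ v = p.1 v + ∑' n : ℕ, ∑ w, (B ^ n) v w * p.2 w)) ∧
    (∀ h k : V → ℝ,
      ((∀ v, 0 ≤ h v) ∧ (∀ v, 0 ≤ k v) ∧ IsHarmonic B h ∧
        (∀ v, Summable (fun n : ℕ => ∑ w, (B ^ n) v w * k w)) ∧
        (∀ v, ψ v = h v + ∑' n : ℕ, ∑ w, (B ^ n) v w * k w)) →
      (∀ v, k v = ψ v - ∑ w, B v w * ψ w) ∧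
      (∀ v, Filter.Tendsto (fun n : ℕ => ∑ w, (B ^ n) v w * ψ w)
        Filter.atTop (nhds (h v)))) := by
  have hk0 : ∀ v, 0 ≤ ψ v - ∑ w, B v w * ψ w := fun v => sub_nonneg.2 (hsub v)
  set k : V → ℝ := fun v => ψ v - ∑ w, B v w * ψ w with hkdef
  have hk : ∀ v, k v = ψ v - ∑ w, B v w * ψ w := fun v => rfl
  have hs : ∀ v, Summable (fun n : ℕ => ∑ w, (B ^ n) v w * k w) := by
    intro v
    refine summable_of_sum_range_le (c := ψ v) (fun n => riesz_nonneg B hB k hk0 n v) fun n => ?_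
    rw [riesz_partial B ψ k hk]
    linarith [riesz_nonneg B hB ψ hψ n v]
  refine ⟨⟨(fun v => ψ v - ∑' n : ℕ, ∑ w, (B ^ n) v w * k w, k),
    ⟨fun v => ?_, hk0, fun v => ?_, hs, fun v => by simp⟩, ?_⟩, ?_⟩
  · refine sub_nonneg.2 (Real.tsum_le_of_sum_range_le
      (fun n => riesz_nonneg B hB k hk0 n v) fun n => ?_)
    rw [riesz_partial B ψ k hk]
    linarith [riesz_nonneg B hB ψ hψ n v]
  · simp only [mul_sub, Finset.sum_sub_distrib]
    rw [riesz_potential B k hs v, hk v]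
    ring
  · rintro ⟨h', k'⟩ ⟨_, _, hh, hs', he⟩
    have hkk : k' = k := funext fun v => (riesz_formulas B ψ h' k' hh hs' he).1 v
    subst hkk
    refine Prod.ext (funext fun v => ?_) rfl
    have := he v
    dsimp only at this ⊢
    linarith
  · rintro h' k' ⟨_, _, hh, hs', he⟩
    exact riesz_formulas B ψ h' k' hh hs' he
end

section
/- Let s ∈ V be a B-summable sink. Then φ^s is a normalized B-almost harmonic vector. -/
open Filter Finset

variable {V : Type*} [Fintype V]

/-- For a `B`-summable sink `s`, the vector `φ^s` is a normalized almost `B`-harmonic vector. -/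
theorem phiSink_isAlmostHarmonic {V : Type*} [Fintype V] [Nonempty V] [DecidableEq V]
    (B : Matrix V V ℝ) (hB : ∀ v w, 0 ≤ B v w)
    (s : V) (hs : IsSummableSink B s) :
    (∀ v, 0 ≤ phiSink B s v) ∧ (∑ v, phiSink B s v = 1) ∧
      IsAlmostHarmonic B (phiSink B s) := by
  obtain ⟨hsink, hsum⟩ := hs
  have hpow : ∀ n : ℕ, ∀ v w, 0 ≤ (B ^ n) v w := by
    intro n
    induction n with
    | zero =>
      intro v w
      rw [pow_zero, Matrix.one_apply]
      split_ifs <;> norm_num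
    | succ k ih =>
      intro v w
      rw [pow_succ, Matrix.mul_apply]
      exact Finset.sum_nonneg fun u _ => mul_nonneg (ih v u) (hB u w)
  have hnn : ∀ v, 0 ≤ ∑' n : ℕ, (B ^ n) v s := fun v => tsum_nonneg fun n => hpow n v s
  have hspos : 0 < ∑' n : ℕ, (B ^ n) s s :=
    (hsum s).tsum_pos (fun n => hpow n s s) 0 (by simp)
  have hpos : 0 < ∑ w, ∑' n : ℕ, (B ^ n) w s :=
    Finset.sum_pos' (fun v _ => hnn v) ⟨s, Finset.mem_univ s, hspos⟩
  refine ⟨fun v => div_nonneg (hnn v) hpos.le, ?_, ?_⟩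
  · simp only [phiSink]
    rw [← Finset.sum_div, div_self hpos.ne']
  · intro v hv
    have hvs : v ≠ s := by
      rintro rfl
      exact hv hsink
    simp only [phiSink]
    simp_rw [← mul_div_assoc]
    rw [← Finset.sum_div]
    congr 1
    rw [(hsum v).tsum_eq_zero_add, pow_zero, Matrix.one_apply_ne hvs, zero_add]
    simp_rw [pow_succ', Matrix.mul_apply]
    rw [Summable.tsum_finsetSum (fun w _ => (hsum w).mul_left (B v w))]
    simp_rw [tsum_mul_left]
end

section
/- Let s ∈ V be a B-summable sink. Then φ^s is an extreme point of the convex set of normalized B-almost harmonic vectors: if ψ₁, ψ₂ are normalized B-almost harmonic vectors, t ∈ (0,1), and φ^s = t ψ₁ + (1−t) ψ₂, then ψ₁ = ψ₂ = φ^s. -/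
open Filter Finset

variable {V : Type*} [Fintype V]

theorem phi_aux {V : Type*} [Fintype V] [DecidableEq V]
    (B : Matrix V V ℝ) (hB : ∀ v w, 0 ≤ B v w)
    (s : V) (hs : IsSummableSink B s) (ψ : V → ℝ)
    (h0 : ∀ v, 0 ≤ ψ v) (hsum : ∑ v, ψ v = 1) (hh : IsAlmostHarmonic B ψ)
    (K : ℝ) (hK : 0 ≤ K) (hle : ∀ v, ψ v ≤ K * ∑' n : ℕ, (B ^ n) v s) :
    ψ = phiSink B s := by
  obtain ⟨hsink, hsm⟩ := hs
  obtain ⟨G, hG⟩ : ∃ G : V → ℝ, G = fun v => ∑' n : ℕ, (B ^ n) v s := ⟨_, rfl⟩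
  have hle' : ∀ v, ψ v ≤ K * G v := by simpa [hG] using hle
  have hpow : ∀ n v w, 0 ≤ (B ^ n) v w := by
    intro n
    induction n with
    | zero => intro v w; simp only [pow_zero, Matrix.one_apply]; split_ifs <;> norm_num
    | succ k ih =>
      intro v w
      rw [pow_succ, Matrix.mul_apply]
      exact Finset.sum_nonneg fun x _ => mul_nonneg (ih _ _) (hB _ _)
  have hG0 : ∀ v, 0 ≤ G v := by
    intro v; rw [hG]; exact tsum_nonneg fun n => hpow n v s
  have hrec : ∀ v, G v = (1 : Matrix V V ℝ) v s + ∑ w, B v w * G w := by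
    intro v
    have e : G v = ∑' n : ℕ, (B ^ n) v s := by rw [hG]
    rw [e, (hsm v).tsum_eq_zero_add, pow_zero]
    congr 1
    have : ∀ n, (B ^ (n+1)) v s = ∑ w, B v w * (B ^ n) w s := by
      intro n; rw [pow_succ', Matrix.mul_apply]
    simp_rw [this]
    rw [Summable.tsum_finsetSum (fun w _ => (hsm w).mul_left _)]
    simp_rw [tsum_mul_left, hG]
  have hGs : G s = 1 := by
    rw [hrec s]; simp [hsink _]
  have hGo : ∀ v, v ≠ s → IsSink B v → G v = 0 := by
    intro v hv hvs
    rw [hrec v]; simp [hvs _, Matrix.one_apply, hv]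
  have hψ : ∀ v, ψ v = ψ s * (1 : Matrix V V ℝ) v s + ∑ w, B v w * ψ w := by
    intro v
    by_cases hv : v = s
    · subst hv; simp [hsink _]
    · simp only [Matrix.one_apply, hv, if_false, mul_zero, zero_add]
      by_cases hvs : IsSink B v
      · have := hle' v
        rw [hGo v hv hvs] at this
        have := h0 v
        simp [hvs _]; linarith
      · exact (hh v hvs).symm
  have hd : ∀ v, ψ v - ψ s * G v = ∑ w, B v w * (ψ w - ψ s * G w) := by
    intro v
    have e1 := hψ v
    have e2 := hrec v
    have : ∑ w, B v w * (ψ w - ψ s * G w) = ∑ w, B v w * ψ w - ψ s * ∑ w, B v w * G w := by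
      rw [Finset.mul_sum, ← Finset.sum_sub_distrib]
      exact Finset.sum_congr rfl fun w _ => by ring
    rw [this]
    linear_combination e1 - ψ s * e2
  have hbd : ∀ v, |ψ v - ψ s * G v| ≤ (K + ψ s) * G v := by
    intro v
    have a := hle' v
    have b := h0 v
    have c := mul_nonneg (h0 s) (hG0 v)
    have d := mul_nonneg hK (hG0 v)
    rw [abs_le]; constructor <;> nlinarith
  have hit : ∀ n v, |ψ v - ψ s * G v| ≤
      (K + ψ s) * (G v - ∑ m ∈ Finset.range n, (B ^ m) v s) := by
    intro n
    induction n with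
    | zero => simpa using hbd
    | succ k ih =>
      intro v
      have e1 : ∑ m ∈ Finset.range (k+1), (B ^ m) v s =
          ∑ w, B v w * (∑ m ∈ Finset.range k, (B ^ m) w s) + (1 : Matrix V V ℝ) v s := by
        rw [Finset.sum_range_succ', pow_zero]
        congr 1
        simp_rw [Finset.mul_sum]
        rw [Finset.sum_comm]
        exact Finset.sum_congr rfl fun m _ => by rw [pow_succ', Matrix.mul_apply]
      have e2 : (K + ψ s) * (G v - ∑ m ∈ Finset.range (k+1), (B ^ m) v s) =
          ∑ w, B v w * ((K + ψ s) * (G w - ∑ m ∈ Finset.range k, (B ^ m) w s)) := by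
        rw [e1, hrec v]
        have : ∑ w, B v w * ((K + ψ s) * (G w - ∑ m ∈ Finset.range k, (B ^ m) w s)) =
          (K + ψ s) * (∑ w, B v w * G w - ∑ w, B v w * ∑ m ∈ Finset.range k, (B ^ m) w s) := by
          rw [← Finset.sum_sub_distrib, Finset.mul_sum]
          exact Finset.sum_congr rfl fun w _ => by ring
        rw [this]; ring
      rw [hd v, e2]
      refine (Finset.abs_sum_le_sum_abs _ _).trans (Finset.sum_le_sum fun w _ => ?_)
      rw [abs_mul, abs_of_nonneg (hB v w)]
      exact mul_le_mul_of_nonneg_left (ih w) (hB v w)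
  have hz : ∀ v, ψ v = ψ s * G v := by
    intro v
    have T : Filter.Tendsto (fun n => (K + ψ s) * (G v - ∑ m ∈ Finset.range n, (B ^ m) v s))
        Filter.atTop (nhds ((K + ψ s) * (G v - G v))) := by
      have := (hsm v).hasSum.tendsto_sum_nat
      have e : G v = ∑' n : ℕ, (B ^ n) v s := by rw [hG]
      rw [← e] at this
      exact (this.const_sub _).const_mul _
    have := ge_of_tendsto' T (fun n => hit n v)
    rw [sub_self, mul_zero] at this
    exact sub_eq_zero.mp (abs_eq_zero.mp (le_antisymm this (abs_nonneg _)))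
  have hS : ψ s * ∑ w, G w = 1 := by
    rw [Finset.mul_sum, ← hsum]
    exact Finset.sum_congr rfl fun w _ => (hz w).symm
  have hS0 : ∑ w, G w ≠ 0 := by
    intro h; rw [h] at hS; simp at hS
  funext v
  have : phiSink B s v = G v / ∑ w, G w := by simp only [phiSink, hG]
  rw [this, eq_div_iff hS0, hz v]
  linear_combination G v * hS

theorem phi_aux2 {V : Type*} [Fintype V] [DecidableEq V]
    (B : Matrix V V ℝ) (hB : ∀ v w, 0 ≤ B v w)
    (s : V) (hs : IsSummableSink B s) (ψ χ : V → ℝ)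
    (h0 : ∀ v, 0 ≤ ψ v) (hsum : ∑ v, ψ v = 1) (hh : IsAlmostHarmonic B ψ)
    (hχ : ∀ v, 0 ≤ χ v) (t u : ℝ) (ht : 0 < t) (hu : 0 ≤ u)
    (heq : phiSink B s = fun v => t * ψ v + u * χ v) :
    ψ = phiSink B s := by
  have hphi : ∀ v, t * ψ v ≤ phiSink B s v := by
    intro v
    rw [heq]
    have := mul_nonneg hu (hχ v)
    simp only; linarith
  have key : ∀ v, ψ v ≤ (t⁻¹ * (∑ w, ∑' n : ℕ, (B ^ n) w s)⁻¹) * ∑' n : ℕ, (B ^ n) v s := by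
    intro v
    have h := hphi v
    have : ψ v = t⁻¹ * (t * ψ v) := by field_simp
    rw [this, mul_assoc]
    refine mul_le_mul_of_nonneg_left (h.trans_eq ?_) (by positivity)
    simp only [phiSink]; rw [div_eq_mul_inv, mul_comm]
  refine phi_aux B hB s hs ψ h0 hsum hh _ ?_ key
  have hpow : ∀ n v w, 0 ≤ (B ^ n) v w := by
    intro n
    induction n with
    | zero => intro v w; simp only [pow_zero, Matrix.one_apply]; split_ifs <;> norm_num
    | succ k ih =>
      intro v w
      rw [pow_succ, Matrix.mul_apply]
      exact Finset.sum_nonneg fun x _ => mul_nonneg (ih _ _) (hB _ _)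
  exact mul_nonneg (by positivity) (inv_nonneg.mpr
    (Finset.sum_nonneg fun w _ => tsum_nonneg fun n => hpow n w s))

/-- For a `B`-summable sink `s`, `φ^s` is an extreme point of the convex set of normalized
almost `B`-harmonic vectors. -/
theorem phiSink_extreme {V : Type*} [Fintype V] [Nonempty V] [DecidableEq V]
    (B : Matrix V V ℝ) (hB : ∀ v w, 0 ≤ B v w)
    (s : V) (hs : IsSummableSink B s)
    (ψ₁ ψ₂ : V → ℝ)
    (h₁ : (∀ v, 0 ≤ ψ₁ v) ∧ (∑ v, ψ₁ v = 1) ∧ IsAlmostHarmonic B ψ₁)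
    (h₂ : (∀ v, 0 ≤ ψ₂ v) ∧ (∑ v, ψ₂ v = 1) ∧ IsAlmostHarmonic B ψ₂)
    (t : ℝ) (ht0 : 0 < t) (ht1 : t < 1)
    (heq : phiSink B s = fun v => t * ψ₁ v + (1 - t) * ψ₂ v) :
    ψ₁ = phiSink B s ∧ ψ₂ = phiSink B s := by
  refine ⟨phi_aux2 B hB s hs ψ₁ ψ₂ h₁.1 h₁.2.1 h₁.2.2 h₂.1 t (1 - t) ht0 (by linarith) heq,
    phi_aux2 B hB s hs ψ₂ ψ₁ h₂.1 h₂.2.1 h₂.2.2 h₁.1 (1 - t) t (by linarith) ht0.le ?_⟩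
  rw [heq]
  funext v
  ring
end

section
/- Let ψ be a normalized B-almost harmonic vector. Then there are a unique (possibly empty) set S of B-summable sinks of B, unique positive numbers t_s ∈ (0,1] for s ∈ S, and a unique B-harmonic vector h ∈ [0,∞)^V such that ψ = h + Σ_{s∈S} t_s φ^s. -/
open Filter Finset

variable {V : Type*} [Fintype V]

section Helpers
variable {U : Type*} [Fintype U] [DecidableEq U]

lemma pow_entry_nonneg (B : Matrix U U ℝ) (hB : ∀ v w, 0 ≤ B v w) (n : ℕ) :
    ∀ v w, 0 ≤ (B ^ n) v w := by
  induction n with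
  | zero =>
    intro v w
    rw [pow_zero, Matrix.one_apply]
    split_ifs <;> norm_num
  | succ n ih =>
    intro v w
    rw [pow_succ, Matrix.mul_apply]
    exact Finset.sum_nonneg fun u _ => mul_nonneg (ih v u) (hB u w)

lemma sink_pow_succ (B : Matrix U U ℝ) {v : U} (hv : IsSink B v) (n : ℕ) (w : U) :
    (B ^ (n + 1)) v w = 0 := by
  rw [pow_succ', Matrix.mul_apply]
  exact Finset.sum_eq_zero fun u _ => by rw [hv u, zero_mul]

lemma green_sink (B : Matrix U U ℝ) {v : U} (hv : IsSink B v) (s : U) :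
    ∑' n : ℕ, (B ^ n) v s = if v = s then 1 else 0 := by
  rw [tsum_eq_single 0]
  · rw [pow_zero, Matrix.one_apply]
  · intro n hn
    obtain ⟨m, rfl⟩ := Nat.exists_eq_succ_of_ne_zero hn
    exact sink_pow_succ B hv m s

lemma green_rec (B : Matrix U U ℝ) {s : U} (hs : ∀ v, Summable (fun n : ℕ => (B ^ n) v s))
    (v : U) :
    ∑' n : ℕ, (B ^ n) v s
      = (if v = s then 1 else 0) + ∑ w, B v w * ∑' n : ℕ, (B ^ n) w s := by
  rw [(hs v).tsum_eq_zero_add, pow_zero, Matrix.one_apply]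
  congr 1
  have : ∀ n : ℕ, (B ^ (n + 1)) v s = ∑ w, B v w * (B ^ n) w s := by
    intro n
    rw [pow_succ', Matrix.mul_apply]
  simp_rw [this]
  rw [Summable.tsum_finsetSum (fun w _ => (hs w).mul_left (B v w))]
  simp_rw [tsum_mul_left]

lemma partial_rec (B : Matrix U U ℝ) (s v : U) (N : ℕ) :
    ∑ n ∈ Finset.range (N + 1), (B ^ n) v s
      = (if v = s then 1 else 0) + ∑ w, B v w * ∑ n ∈ Finset.range N, (B ^ n) w s := by
  rw [Finset.sum_range_succ', pow_zero, Matrix.one_apply, add_comm]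
  congr 1
  simp_rw [pow_succ', Matrix.mul_apply, Finset.mul_sum]
  rw [Finset.sum_comm]

lemma partial_le (B : Matrix U U ℝ) (hB : ∀ v w, 0 ≤ B v w)
    (ψ : U → ℝ) (hψ : ∀ v, 0 ≤ ψ v) (halm : IsAlmostHarmonic B ψ)
    (S : Finset U) (hS : ∀ s ∈ S, IsSink B s) (N : ℕ) :
    ∀ v, ∑ s ∈ S, ψ s * ∑ n ∈ Finset.range N, (B ^ n) v s ≤ ψ v := by
  induction N with
  | zero => intro v; simpa using hψ v
  | succ N ih =>
    intro v
    have key : ∑ s ∈ S, ψ s * ∑ n ∈ Finset.range (N + 1), (B ^ n) v s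
        = (if v ∈ S then ψ v else 0)
          + ∑ w, B v w * ∑ s ∈ S, ψ s * ∑ n ∈ Finset.range N, (B ^ n) w s := by
      simp_rw [partial_rec, mul_add, Finset.sum_add_distrib]
      congr 1
      · simp
      · simp_rw [Finset.mul_sum (s := S)]
        rw [Finset.sum_comm]
        refine Finset.sum_congr rfl fun s _ => ?_
        rw [Finset.mul_sum]
        exact Finset.sum_congr rfl fun w _ => by ring
    rw [key]
    by_cases hv : IsSink B v
    · have : ∑ w, B v w * ∑ s ∈ S, ψ s * ∑ n ∈ Finset.range N, (B ^ n) w s = 0 :=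
        Finset.sum_eq_zero fun u _ => by rw [hv u, zero_mul]
      rw [this, add_zero]
      split_ifs
      · exact le_rfl
      · exact hψ v
    · rw [if_neg (fun h => hv (hS v h)), zero_add, ← halm v hv]
      exact Finset.sum_le_sum fun w _ => mul_le_mul_of_nonneg_left (ih w) (hB v w)

lemma total_pos (B : Matrix U U ℝ) (hB : ∀ v w, 0 ≤ B v w) {s : U} (hs : IsSink B s) :
    0 < ∑ w, ∑' n : ℕ, (B ^ n) w s := by
  have h1 : ∑' n : ℕ, (B ^ n) s s = 1 := by rw [green_sink B hs, if_pos rfl]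
  have h2 := Finset.single_le_sum (f := fun w => ∑' n : ℕ, (B ^ n) w s)
    (fun w _ => tsum_nonneg fun n => pow_entry_nonneg B hB n w s) (Finset.mem_univ s)
  simp only [h1] at h2
  linarith

/-- Any admissible decomposition has determined values at sinks. -/
lemma value_at_sink (B : Matrix U U ℝ) {ψ : U → ℝ} {S : Finset U} {t h : U → ℝ}
    (hh : IsHarmonic B h)
    (hdec : ∀ v, ψ v = h v + ∑ s ∈ S, t s * phiSink B s v) {v : U} (hv : IsSink B v) :
    ψ v = if v ∈ S then t v / ∑ w, ∑' n : ℕ, (B ^ n) w v else 0 := by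
  have h0 : h v = 0 := by
    rw [← hh v]
    exact Finset.sum_eq_zero fun u _ => by rw [hv u, zero_mul]
  rw [hdec v, h0, zero_add]
  have : ∀ s ∈ S, t s * phiSink B s v
      = if v = s then t s / ∑ w, ∑' n : ℕ, (B ^ n) w s else 0 := by
    intro s _
    unfold phiSink
    rw [green_sink B hv]
    split_ifs
    · ring
    · simp
  rw [Finset.sum_congr rfl this]
  simp

end Helpers

/-- Every normalized almost `B`-harmonic vector `ψ` decomposes uniquely as
`ψ = h + Σ_{s ∈ S} t_s φ^s` with `S` a set of `B`-summable sinks, `t_s ∈ (0,1]`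
and `h` a nonnegative `B`-harmonic vector. -/
theorem almostHarmonic_decomposition {V : Type*} [Fintype V] [Nonempty V] [DecidableEq V]
    (B : Matrix V V ℝ) (hB : ∀ v w, 0 ≤ B v w)
    (ψ : V → ℝ) (hψ : ∀ v, 0 ≤ ψ v) (hnorm : ∑ v, ψ v = 1)
    (halm : IsAlmostHarmonic B ψ) :
    ∃! p : Finset V × (V → ℝ) × (V → ℝ),
      (∀ s ∈ p.1, IsSummableSink B s) ∧
      (∀ s ∈ p.1, 0 < p.2.1 s ∧ p.2.1 s ≤ 1) ∧
      (∀ s, s ∉ p.1 → p.2.1 s = 0) ∧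
      (∀ v, 0 ≤ p.2.2 v) ∧ IsHarmonic B p.2.2 ∧
      (∀ v, ψ v = p.2.2 v + ∑ s ∈ p.1, p.2.1 s * phiSink B s v) := by
  classical
  set Z : V → ℝ := fun s => ∑ w, ∑' n : ℕ, (B ^ n) w s with hZ
  set S : Finset V := Finset.univ.filter (fun s => IsSink B s ∧ 0 < ψ s) with hSdef
  have memS : ∀ s, s ∈ S ↔ IsSink B s ∧ 0 < ψ s := by intro s; simp [hSdef]
  have hSs : ∀ s ∈ S, IsSink B s := fun s hs => ((memS s).1 hs).1
  have hpl := partial_le B hB ψ hψ halm S hSs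
  have hnn := pow_entry_nonneg B hB
  have hsum : ∀ s ∈ S, ∀ v, Summable (fun n : ℕ => (B ^ n) v s) := by
    intro s hs v
    have hp := ((memS s).1 hs).2
    refine summable_of_sum_range_le (c := ψ v / ψ s) (fun n => hnn n v s) fun N => ?_
    rw [le_div_iff₀ hp, mul_comm]
    refine le_trans ?_ (hpl N v)
    exact Finset.single_le_sum (f := fun s => ψ s * ∑ n ∈ Finset.range N, (B ^ n) v s)
      (fun u _ => mul_nonneg (hψ u) (Finset.sum_nonneg fun n _ => hnn n v u)) hs
  have hle : ∀ v, ∑ s ∈ S, ψ s * ∑' n : ℕ, (B ^ n) v s ≤ ψ v := by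
    intro v
    refine le_of_tendsto (f := fun N : ℕ => ∑ s ∈ S, ψ s * ∑ n ∈ Finset.range N, (B ^ n) v s)
      (x := atTop) ?_ (Filter.Eventually.of_forall fun N => hpl N v)
    exact tendsto_finsetSum _ fun s hs =>
      ((hsum s hs v).hasSum.tendsto_sum_nat).const_mul (ψ s)
  have hZpos : ∀ s, IsSink B s → 0 < Z s := fun s hs => total_pos B hB hs
  have hterm : ∀ s ∈ S, ∀ v, (ψ s * Z s) * phiSink B s v = ψ s * ∑' n : ℕ, (B ^ n) v s := by
    intro s hs v
    have := (hZpos s (hSs s hs)).ne'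
    change (ψ s * Z s) * ((∑' n : ℕ, (B ^ n) v s) / Z s) = _
    field_simp
  refine ⟨(S, fun s => if s ∈ S then ψ s * Z s else 0,
    fun v => ψ v - ∑ s ∈ S, ψ s * ∑' n : ℕ, (B ^ n) v s), ⟨?_, ?_, ?_, ?_, ?_, ?_⟩, ?_⟩
  · exact fun s hs => ⟨hSs s hs, hsum s hs⟩
  · intro s hs
    have hs' : s ∈ S := hs
    simp only [if_pos hs']
    refine ⟨mul_pos ((memS s).1 hs').2 (hZpos s (hSs s hs')), ?_⟩
    rw [← hnorm, hZ, Finset.mul_sum]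
    refine Finset.sum_le_sum fun v _ => le_trans ?_ (hle v)
    exact Finset.single_le_sum (f := fun s => ψ s * ∑' n : ℕ, (B ^ n) v s)
      (fun u _ => mul_nonneg (hψ u) (tsum_nonneg fun n => hnn n v u)) hs'
  · intro s hs
    exact if_neg hs
  · intro v
    exact sub_nonneg.2 (hle v)
  · intro v
    have key : ∑ s ∈ S, ψ s * ∑' n : ℕ, (B ^ n) v s
        = (if v ∈ S then ψ v else 0)
          + ∑ w, B v w * ∑ s ∈ S, ψ s * ∑' n : ℕ, (B ^ n) w s := by
      rw [Finset.sum_congr rfl fun s hs => by rw [green_rec B (hsum s hs) v]]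
      simp_rw [mul_add, Finset.sum_add_distrib]
      congr 1
      · simp
      · simp_rw [Finset.mul_sum (s := S)]
        rw [Finset.sum_comm]
        refine Finset.sum_congr rfl fun s _ => ?_
        rw [Finset.mul_sum]
        exact Finset.sum_congr rfl fun w _ => by ring
    simp only [mul_sub, Finset.sum_sub_distrib]
    rw [key]
    by_cases hv : IsSink B v
    · have h1 : ∑ w, B v w * ψ w = 0 :=
        Finset.sum_eq_zero fun u _ => by rw [hv u, zero_mul]
      have h2 : (if v ∈ S then ψ v else 0) = ψ v := by
        split_ifs with h
        · rfl
        · by_contra hne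
          exact h ((memS v).2 ⟨hv, lt_of_le_of_ne (hψ v) hne⟩)
      rw [h1, h2]; ring
    · rw [halm v hv, if_neg (fun h => hv (hSs v h)), zero_add]
  · intro v
    have : ∑ s ∈ S, (if s ∈ S then ψ s * Z s else 0) * phiSink B s v
        = ∑ s ∈ S, ψ s * ∑' n : ℕ, (B ^ n) v s :=
      Finset.sum_congr rfl fun s hs => by rw [if_pos hs, hterm s hs v]
    simp only [this]
    ring
  · rintro ⟨S', t, h⟩ ⟨h1, h2, h3, h4, h5, h6⟩
    simp only at h1 h2 h3 h4 h5 h6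
    have hval := fun v (hv : IsSink B v) => value_at_sink B h5 h6 hv
    have hSS : S' = S := by
      ext s
      rw [memS]
      constructor
      · intro hs
        have hk := (h1 s hs).1
        refine ⟨hk, ?_⟩
        rw [hval s hk, if_pos hs]
        exact div_pos (h2 s hs).1 (hZpos s hk)
      · rintro ⟨hk, hp⟩
        by_contra hn
        rw [hval s hk, if_neg hn] at hp
        exact lt_irrefl _ hp
    subst hSS
    have ht : ∀ s ∈ S, t s = ψ s * Z s := by
      intro s hs
      have hk := hSs s hs
      rw [hval s hk, if_pos hs]
      exact (div_mul_cancel₀ _ (hZpos s hk).ne').symm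
    refine Prod.ext rfl (Prod.ext ?_ ?_)
    · funext s
      by_cases hs : s ∈ S
      · simp only [if_pos hs, ht s hs]
      · simp only [if_neg hs, h3 s hs]
    · funext v
      have : ∑ s ∈ S, t s * phiSink B s v = ∑ s ∈ S, ψ s * ∑' n : ℕ, (B ^ n) v s :=
        Finset.sum_congr rfl fun s hs => by rw [ht s hs, hterm s hs v]
      have h7 := h6 v
      rw [this] at h7
      simp only
      linarith
end

section
/- Let C be a B-harmonic component. Then there exists a unique normalized B-harmonic vector φ such that Σ_{w∈C} B_{vw} φ_w = φ_v for every v ∈ C and such that φ_v ≠ 0 if and only if v ∈ C̄ (the closure of C). -/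
open Filter Finset

variable {V : Type*} [Fintype V]

theorem aux_pow_nonneg {n : Type*} [Fintype n] [DecidableEq n] (A : Matrix n n ℝ)
    (h0 : ∀ i j, 0 ≤ A i j) (k : ℕ) : ∀ i j, 0 ≤ (A ^ k) i j := by
  induction k with
  | zero => intro i j; rw [pow_zero, Matrix.one_apply]; split_ifs <;> norm_num
  | succ k ih =>
    intro i j
    rw [pow_succ, Matrix.mul_apply]
    exact Finset.sum_nonneg fun l _ => mul_nonneg (ih _ _) (h0 _ _)

theorem aux_mulVec_pos {n : Type*} [Fintype n] (P : Matrix n n ℝ)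
    (hP : ∀ i j, 0 < P i j) (x : n → ℝ) (hx : ∀ i, 0 ≤ x i) (j : n) (hj : 0 < x j) (i : n) :
    0 < (P.mulVec x) i := by
  rw [Matrix.mulVec, dotProduct]
  exact Finset.sum_pos' (fun l _ => mul_nonneg (hP _ _).le (hx _))
    ⟨j, Finset.mem_univ _, mul_pos (hP _ _) hj⟩

theorem aux_exists_P {n : Type*} [Fintype n] [DecidableEq n] (A : Matrix n n ℝ)
    (h0 : ∀ i j, 0 ≤ A i j) (hirr : ∀ i j, ∃ k : ℕ, 0 < (A ^ k) i j) :
    ∃ P : Matrix n n ℝ, (∀ i j, 0 < P i j) ∧ Commute A P := by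
  choose k hk using hirr
  refine ⟨∑ i, ∑ j, A ^ (k i j), ?_, ?_⟩
  · intro a b
    rw [Matrix.sum_apply]
    refine Finset.sum_pos' (fun i _ => ?_) ⟨a, Finset.mem_univ _, ?_⟩
    · rw [Matrix.sum_apply]
      exact Finset.sum_nonneg fun j _ => aux_pow_nonneg A h0 _ _ _
    · rw [Matrix.sum_apply]
      exact Finset.sum_pos' (fun j _ => aux_pow_nonneg A h0 _ _ _)
        ⟨b, Finset.mem_univ _, hk a b⟩
  · exact Commute.sum_right _ _ _ fun i _ => Commute.sum_right _ _ _ fun j _ =>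
      (Commute.refl A).pow_right _

theorem aux_perron {n : Type*} [Fintype n] [DecidableEq n] [Nonempty n] (A : Matrix n n ℝ)
    (h0 : ∀ i j, 0 ≤ A i j) (hirr : ∀ i j, ∃ k : ℕ, 0 < (A ^ k) i j) :
    ∃ t : ℝ, 0 ≤ t ∧ ∃ x : n → ℝ, (∀ i, 0 < x i) ∧ A.mulVec x = t • x := by
  obtain ⟨P, hP, hcomm⟩ := aux_exists_P A h0 hirr
  set S : ℝ := ∑ i, ∑ j, A i j with hS
  have hS0 : 0 ≤ S := Finset.sum_nonneg fun i _ => Finset.sum_nonneg fun j _ => h0 i j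
  -- bound
  have hbound : ∀ (t : ℝ) (x : n → ℝ), x ∈ stdSimplex ℝ n →
      (∀ i, t * x i ≤ (A.mulVec x) i) → t ≤ S := by
    intro t x hx h
    have h1 : ∑ i, t * x i ≤ ∑ i, (A.mulVec x) i := Finset.sum_le_sum fun i _ => h i
    rw [← Finset.mul_sum, hx.2, mul_one] at h1
    refine h1.trans (Finset.sum_le_sum fun i _ => ?_)
    rw [Matrix.mulVec, dotProduct]
    refine Finset.sum_le_sum fun j _ => ?_
    have : x j ≤ 1 := by
      rw [← hx.2]; exact Finset.single_le_sum (fun l _ => hx.1 l) (Finset.mem_univ j)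
    exact mul_le_of_le_one_right (h0 i j) this
  let K : Set (ℝ × (n → ℝ)) :=
    (Set.Icc 0 S ×ˢ stdSimplex ℝ n) ∩ {p | ∀ i, p.1 * p.2 i ≤ (A.mulVec p.2) i}
  have hK : IsCompact K := by
    apply IsCompact.inter_right
    · exact isCompact_Icc.prod (isCompact_stdSimplex ℝ n)
    · rw [Set.ofPred_forall]
      refine isClosed_iInter fun i => isClosed_le (by fun_prop) ?_
      simp only [Matrix.mulVec, dotProduct]
      fun_prop
  have hKne : K.Nonempty := by
    obtain ⟨a⟩ := (inferInstance : Nonempty n)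
    refine ⟨(0, Pi.single a 1), ⟨⟨⟨le_rfl, hS0⟩, single_mem_stdSimplex ℝ a⟩, ?_⟩⟩
    intro i
    simp only [zero_mul, Matrix.mulVec, dotProduct]
    exact Finset.sum_nonneg fun j _ => mul_nonneg (h0 _ _)
      ((single_mem_stdSimplex ℝ a).1 j)
  obtain ⟨⟨t, x⟩, ⟨⟨ht, hx⟩, hle⟩, hmax⟩ := hK.exists_isMaxOn hKne continuous_fst.continuousOn
  simp only at ht hx
  replace hle : ∀ i, t * x i ≤ (A.mulVec x) i := hle
  have hxpos : ∃ j, 0 < x j := by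
    by_contra! hcon
    have := hx.2
    have h2 : ∑ i, x i ≤ 0 := Finset.sum_nonpos fun i _ => hcon i
    linarith
  obtain ⟨j0, hj0⟩ := hxpos
  have hy := aux_mulVec_pos P hP x hx.1 j0 hj0
  have heq : A.mulVec x = t • x := by
    by_contra hne
    set z : n → ℝ := A.mulVec x - t • x with hz
    have hz0 : ∀ i, 0 ≤ z i := fun i => by
      have := hle i
      simp only [hz, Pi.sub_apply, Pi.smul_apply, smul_eq_mul]; linarith
    have hzne : ∃ j, 0 < z j := by
      by_contra! hcon
      apply hne
      have : z = 0 := funext fun i => le_antisymm (hcon i) (hz0 i)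
      exact sub_eq_zero.mp this
    obtain ⟨j1, hj1⟩ := hzne
    have hPz := aux_mulVec_pos P hP z hz0 j1 hj1
    set y := P.mulVec x with hydef
    have hAy : A.mulVec y = t • y + P.mulVec z := by
      rw [hz, Matrix.mulVec_sub, Matrix.mulVec_smul, Matrix.mulVec_mulVec, hcomm.eq,
        ← Matrix.mulVec_mulVec]
      abel
    obtain ⟨i0, hi0⟩ := Finite.exists_min (fun i => P.mulVec z i / y i)
    set ε := P.mulVec z i0 / y i0 with hε
    have hεpos : 0 < ε := div_pos (hPz _) (hy _)
    have hεle : ∀ i, ε * y i ≤ P.mulVec z i := fun i => (le_div_iff₀ (hy i)).mp (hi0 i)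
    set s := ∑ i, y i with hs
    have hspos : 0 < s := Finset.sum_pos (fun i _ => hy i) Finset.univ_nonempty
    have hmem : s⁻¹ • y ∈ stdSimplex ℝ n := by
      refine ⟨fun i => ?_, ?_⟩
      · simp only [Pi.smul_apply, smul_eq_mul]
        exact mul_nonneg (inv_nonneg.mpr hspos.le) (hy i).le
      · simp only [Pi.smul_apply, smul_eq_mul]
        rw [← Finset.mul_sum, ← hs, inv_mul_cancel₀ hspos.ne']
    have hle' : ∀ i, (t + ε) * (s⁻¹ • y) i ≤ (A.mulVec (s⁻¹ • y)) i := by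
      intro i
      rw [Matrix.mulVec_smul, hAy]
      simp only [Pi.smul_apply, Pi.add_apply, smul_eq_mul]
      have h3 : (t + ε) * y i ≤ t * y i + P.mulVec z i := by linarith [hεle i]
      have := mul_le_mul_of_nonneg_left h3 (inv_nonneg.mpr hspos.le)
      linarith
    have hin : (t + ε, s⁻¹ • y) ∈ K :=
      ⟨⟨⟨by linarith [ht.1], hbound _ _ hmem hle'⟩, hmem⟩, hle'⟩
    have : t + ε ≤ t := hmax hin
    linarith
  refine ⟨t, ht.1, x, ?_, heq⟩
  have hPx : A.mulVec (P.mulVec x) = t • P.mulVec x := by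
    rw [Matrix.mulVec_mulVec, hcomm.eq, ← Matrix.mulVec_mulVec, heq, Matrix.mulVec_smul]
  intro i
  by_contra hcon
  have hxi : x i = 0 := le_antisymm (not_lt.mp hcon) (hx.1 i)
  -- powers
  have hpow : ∀ k : ℕ, (A ^ k).mulVec x = t ^ k • x := by
    intro k
    induction k with
    | zero => simp
    | succ k ih => rw [pow_succ, ← Matrix.mulVec_mulVec, heq, Matrix.mulVec_smul, ih, smul_smul,
        pow_succ, mul_comm]
  obtain ⟨k, hk⟩ := hirr i j0
  have h1 := congrFun (hpow k) i
  simp only [Pi.smul_apply, hxi, smul_zero, Matrix.mulVec, dotProduct] at h1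
  have h2 : 0 < ∑ j, (A ^ k) i j * x j :=
    Finset.sum_pos' (fun l _ => mul_nonneg (aux_pow_nonneg A h0 _ _ _) (hx.1 _))
      ⟨j0, Finset.mem_univ _, mul_pos hk hj0⟩
  linarith

theorem aux_pow_mulVec {n : Type*} [Fintype n] [DecidableEq n] (A : Matrix n n ℝ) (t : ℝ)
    (x : n → ℝ) (heq : A.mulVec x = t • x) (k : ℕ) : (A ^ k).mulVec x = t ^ k • x := by
  induction k with
  | zero => simp
  | succ k ih => rw [pow_succ, ← Matrix.mulVec_mulVec, heq, Matrix.mulVec_smul, ih, smul_smul,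
      pow_succ, mul_comm]

theorem aux_specRad_eq {n : Type*} [Fintype n] [DecidableEq n] [Nonempty n] (A : Matrix n n ℝ)
    (h0 : ∀ i j, 0 ≤ A i j) (t : ℝ) (ht : 0 ≤ t) (x : n → ℝ) (hx : ∀ i, 0 < x i)
    (heq : A.mulVec x = t • x) : specRad A = t := by
  obtain ⟨a, ha⟩ := Finite.exists_min x
  obtain ⟨b, hb⟩ := Finite.exists_max x
  set s := ∑ i, x i with hs
  have hspos : 0 < s := Finset.sum_pos (fun i _ => hx i) Finset.univ_nonempty
  have hsum : ∀ k : ℕ, ∑ i, ∑ j, (A ^ k) i j * x j = t ^ k * s := by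
    intro k
    rw [hs, Finset.mul_sum]
    refine Finset.sum_congr rfl fun i _ => ?_
    exact congrFun (aux_pow_mulVec A t x heq k) i
  have hup : ∀ k : ℕ, ∑ i, ∑ j, |(A ^ k) i j| ≤ (s / x a) * t ^ k := by
    intro k
    rw [div_mul_eq_mul_div, le_div_iff₀ (hx a), mul_comm s, ← hsum, Finset.sum_mul]
    refine Finset.sum_le_sum fun i _ => ?_
    rw [Finset.sum_mul]
    refine Finset.sum_le_sum fun j _ => ?_
    rw [abs_of_nonneg (aux_pow_nonneg A h0 _ _ _)]
    exact mul_le_mul_of_nonneg_left (ha j) (aux_pow_nonneg A h0 _ _ _)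
  have hlow : ∀ k : ℕ, (s / x b) * t ^ k ≤ ∑ i, ∑ j, |(A ^ k) i j| := by
    intro k
    rw [div_mul_eq_mul_div, div_le_iff₀ (hx b), mul_comm s, ← hsum, Finset.sum_mul]
    refine Finset.sum_le_sum fun i _ => ?_
    rw [Finset.sum_mul]
    refine Finset.sum_le_sum fun j _ => ?_
    rw [abs_of_nonneg (aux_pow_nonneg A h0 _ _ _)]
    exact mul_le_mul_of_nonneg_left (hb j) (aux_pow_nonneg A h0 _ _ _)
  have key : ∀ c : ℝ, 0 < c →
      Tendsto (fun k : ℕ => (c * t ^ k) ^ ((1 : ℝ) / (k : ℝ))) atTop (nhds t) := by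
    intro c hc
    have h1 : Tendsto (fun k : ℕ => c ^ ((1 : ℝ) / (k : ℝ)) * t) atTop (nhds (c ^ (0 : ℝ) * t)) :=
      (tendsto_const_nhds.rpow (tendsto_one_div_atTop_nhds_zero_nat (𝕜 := ℝ))
        (Or.inl hc.ne')).mul_const t
    rw [Real.rpow_zero, one_mul] at h1
    refine h1.congr' ?_
    filter_upwards [eventually_ge_atTop 1] with k hk
    rw [Real.mul_rpow hc.le (pow_nonneg ht k), one_div, Real.pow_rpow_inv_natCast ht (by omega)]
  apply Tendsto.limsup_eq
  refine tendsto_of_tendsto_of_tendsto_of_le_of_le (key _ (div_pos hspos (hx b)))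
    (key _ (div_pos hspos (hx a))) (fun k => ?_) (fun k => ?_)
  · exact Real.rpow_le_rpow (mul_nonneg (div_pos hspos (hx b)).le (pow_nonneg ht k)) (hlow k)
      (by positivity)
  · exact Real.rpow_le_rpow (Finset.sum_nonneg fun i _ => Finset.sum_nonneg fun j _ => abs_nonneg _)
      (hup k) (by positivity)

theorem aux_norm_pow {n : Type*} [Fintype n] [DecidableEq n] (M : Matrix n n ℝ) (k : ℕ) :
    ∑ i, ∑ j, |(M ^ (k + 1)) i j| ≤ (∑ i, ∑ j, |M i j|) ^ (k + 1) := by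
  induction k with
  | zero => simp
  | succ k ih =>
    set S := ∑ i, ∑ j, |M i j| with hS
    have hS0 : 0 ≤ S := Finset.sum_nonneg fun i _ => Finset.sum_nonneg fun j _ => abs_nonneg _
    rw [pow_succ M, pow_succ S]
    refine le_trans ?_ (mul_le_mul_of_nonneg_right ih hS0)
    rw [Finset.sum_mul]
    refine Finset.sum_le_sum fun i _ => ?_
    rw [Finset.sum_mul]
    calc ∑ j, |(M ^ (k + 1) * M) i j| ≤ ∑ j, ∑ l, |(M ^ (k + 1)) i l| * |M l j| := by
          refine Finset.sum_le_sum fun j _ => ?_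
          rw [Matrix.mul_apply]
          refine (Finset.abs_sum_le_sum_abs _ _).trans (le_of_eq ?_)
          simp only [abs_mul]
      _ = ∑ l, |(M ^ (k + 1)) i l| * ∑ j, |M l j| := by
          rw [Finset.sum_comm]; simp only [Finset.mul_sum]
      _ ≤ ∑ l, |(M ^ (k + 1)) i l| * S := by
          refine Finset.sum_le_sum fun l _ => mul_le_mul_of_nonneg_left ?_ (abs_nonneg _)
          exact Finset.single_le_sum (f := fun i => ∑ j, |M i j|)
            (fun i _ => Finset.sum_nonneg fun j _ => abs_nonneg _) (Finset.mem_univ l)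

theorem aux_decay {n : Type*} [Fintype n] [DecidableEq n] (M : Matrix n n ℝ)
    (h : specRad M < 1) (i j : n) : Summable (fun k : ℕ => (M ^ k) i j) := by
  obtain ⟨r, hr1, hr2⟩ := exists_between (max_lt h (zero_lt_one (α := ℝ)))
  have hr0 : 0 < r := lt_of_le_of_lt (le_max_right _ _) hr1
  replace hr1 : specRad M < r := lt_of_le_of_lt (le_max_left _ _) hr1
  have hN0 : ∀ k : ℕ, 0 ≤ ∑ i, ∑ j, |(M ^ k) i j| := fun k =>
    Finset.sum_nonneg fun i _ => Finset.sum_nonneg fun j _ => abs_nonneg _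
  have hev := eventually_lt_of_limsup_lt hr1 (by
    refine isBoundedUnder_of_eventually_le (a := ∑ i, ∑ j, |M i j|) ?_
    filter_upwards [eventually_ge_atTop 1] with k hk
    obtain ⟨m, rfl⟩ : ∃ m, k = m + 1 := ⟨k - 1, by omega⟩
    have hS0 : 0 ≤ ∑ i, ∑ j, |M i j| :=
      Finset.sum_nonneg fun i _ => Finset.sum_nonneg fun j _ => abs_nonneg _
    refine (Real.rpow_le_rpow (hN0 _) (aux_norm_pow M m) (by positivity)).trans (le_of_eq ?_)
    rw [one_div, Real.pow_rpow_inv_natCast hS0 (by omega)])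
  have hgeo := summable_geometric_of_lt_one hr0.le hr2
  refine Summable.of_norm_bounded_eventually_nat hgeo ?_
  filter_upwards [hev, eventually_ge_atTop 1] with k hk hk1
  have h1 : ∑ i, ∑ j, |(M ^ k) i j| ≤ r ^ k := by
    have h2 := pow_le_pow_left₀ (Real.rpow_nonneg (hN0 k) _) hk.le k
    rwa [one_div, Real.rpow_inv_natCast_pow (hN0 k) (by omega)] at h2
  refine le_trans ?_ h1
  rw [Real.norm_eq_abs]
  refine le_trans ?_ (Finset.single_le_sum (f := fun i => ∑ j, |(M ^ k) i j|)
    (fun i _ => Finset.sum_nonneg fun j _ => abs_nonneg _) (Finset.mem_univ i))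
  exact Finset.single_le_sum (f := fun j => |(M ^ k) i j|) (fun _ _ => abs_nonneg _)
    (Finset.mem_univ j)

theorem aux_solve {n : Type*} [Fintype n] [DecidableEq n] (M : Matrix n n ℝ)
    (h0 : ∀ i j, 0 ≤ M i j) (hs : ∀ i j, Summable (fun k : ℕ => (M ^ k) i j))
    (b : n → ℝ) (hb : ∀ i, 0 ≤ b i) :
    ∃ y : n → ℝ, (∀ i, 0 ≤ y i) ∧ ∀ i, y i = b i + ∑ j, M i j * y j := by
  have hsum : ∀ i, Summable (fun k : ℕ => ((M ^ k).mulVec b) i) := by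
    intro i
    simp only [Matrix.mulVec, dotProduct]
    exact summable_sum fun j _ => (hs i j).mul_right _
  refine ⟨fun i => ∑' k : ℕ, ((M ^ k).mulVec b) i, fun i => tsum_nonneg fun k => ?_, fun i => ?_⟩
  · exact Finset.sum_nonneg fun j _ => mul_nonneg (aux_pow_nonneg M h0 _ _ _) (hb j)
  · beta_reduce
    rw [(hsum i).tsum_eq_zero_add]
    congr 1
    · simp
    · simp only [← tsum_mul_left]
      rw [← Summable.tsum_finsetSum fun j _ => (hsum j).mul_left _]
      refine tsum_congr fun k => ?_
      rw [pow_succ', ← Matrix.mulVec_mulVec]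
      rfl

theorem aux_fix_zero {n : Type*} [Fintype n] [DecidableEq n] (M : Matrix n n ℝ)
    (hs : ∀ i j, Summable (fun k : ℕ => (M ^ k) i j))
    (u : n → ℝ) (hu : M.mulVec u = u) : u = 0 := by
  have h1 : ∀ k : ℕ, (M ^ k).mulVec u = u := by
    intro k
    have := aux_pow_mulVec M 1 u (by rw [hu, one_smul]) k
    rwa [one_pow, one_smul] at this
  funext i
  have h2 : Tendsto (fun k : ℕ => ∑ j, (M ^ k) i j * u j) atTop (nhds (∑ j, 0 * u j)) :=
    tendsto_finsetSum _ fun j _ => (hs i j).tendsto_atTop_zero.mul_const _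
  have h3 : (fun k : ℕ => ∑ j, (M ^ k) i j * u j) = fun _ => u i :=
    funext fun k => congrFun (h1 k) i
  rw [h3] at h2
  simpa using tendsto_nhds_unique tendsto_const_nhds h2

theorem aux_perron_unique {n : Type*} [Fintype n] [DecidableEq n] [Nonempty n] (A : Matrix n n ℝ)
    (h0 : ∀ i j, 0 ≤ A i j) (hirr : ∀ i j, ∃ k : ℕ, 0 < (A ^ k) i j)
    (x y : n → ℝ) (hx : ∀ i, 0 < x i) (hAx : A.mulVec x = x) (hAy : A.mulVec y = y) :
    ∃ t : ℝ, y = t • x := by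
  obtain ⟨a, ha⟩ := Finite.exists_min (fun i => y i / x i)
  set t := y a / x a with ht
  refine ⟨t, ?_⟩
  have hz0 : ∀ i, 0 ≤ (y - t • x) i := fun i => by
    have := (le_div_iff₀ (hx i)).mp (ha i)
    simp only [Pi.sub_apply, Pi.smul_apply, smul_eq_mul]; linarith
  have hza : (y - t • x) a = 0 := by
    simp only [Pi.sub_apply, Pi.smul_apply, smul_eq_mul, ht]
    rw [div_mul_cancel₀ _ (hx a).ne', sub_self]
  have hAz : A.mulVec (y - t • x) = (1 : ℝ) • (y - t • x) := by
    rw [Matrix.mulVec_sub, Matrix.mulVec_smul, hAx, hAy, one_smul]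
  rw [← sub_eq_zero]
  set z := y - t • x with hz
  funext j
  by_contra hj
  have hj' : 0 < z j := lt_of_le_of_ne (hz0 j) (Ne.symm hj)
  obtain ⟨k, hk⟩ := hirr a j
  have h1 := congrFun (aux_pow_mulVec A 1 z hAz k) a
  simp only [one_pow, one_smul, hza, Matrix.mulVec, dotProduct] at h1
  have h2 : 0 < ∑ j, (A ^ k) a j * z j :=
    Finset.sum_pos' (fun l _ => mul_nonneg (aux_pow_nonneg A h0 _ _ _) (hz0 _))
      ⟨j, Finset.mem_univ _, mul_pos hk hj'⟩
  linarith

theorem aux_specRadOn_eq {V : Type*} [Fintype V] (B : Matrix V V ℝ) (S : Set V)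
    [i1 : Fintype S] [i2 : DecidableEq S] :
    specRadOn B S = specRad (fun i j : S => B i.1 j.1) := by
  unfold specRadOn
  rw [Subsingleton.elim (Set.toFinite S).fintype i1,
    Subsingleton.elim (Classical.decEq _ : DecidableEq S) i2]

theorem aux_reaches_trans {V : Type*} [Fintype V] [DecidableEq V] (B : Matrix V V ℝ)
    (hB : ∀ v w, 0 ≤ B v w) {u v w : V} (h1 : Reaches B u v) (h2 : Reaches B v w) :
    Reaches B u w := by
  obtain ⟨m, hm⟩ := h1
  obtain ⟨k, hk⟩ := h2
  refine ⟨m + k, ?_⟩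
  rw [pow_add, Matrix.mul_apply]
  exact Finset.sum_pos' (fun l _ => mul_nonneg (aux_pow_nonneg B hB _ _ _)
    (aux_pow_nonneg B hB _ _ _)) ⟨v, Finset.mem_univ _, mul_pos hm hk⟩

theorem aux_reaches_edge {V : Type*} [Fintype V] [DecidableEq V] (B : Matrix V V ℝ)
    (hB : ∀ v w, 0 ≤ B v w) {u v : V} (h : B u v ≠ 0) : Reaches B u v :=
  ⟨1, by rw [pow_one]; exact lt_of_le_of_ne (hB _ _) (Ne.symm h)⟩

theorem aux_reaches_refl {V : Type*} [Fintype V] [DecidableEq V] (B : Matrix V V ℝ)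
    (u : V) : Reaches B u u :=
  ⟨0, by rw [pow_zero, Matrix.one_apply_eq]; norm_num⟩

theorem aux_irr {V : Type*} [Fintype V] [DecidableEq V] (B : Matrix V V ℝ)
    (hB : ∀ v w, 0 ≤ B v w) (C : Set V) [Fintype C] [DecidableEq C]
    (A : Matrix C C ℝ) (hA : ∀ i j : C, A i j = B i.1 j.1)
    (hconv : ∀ v ∈ C, ∀ w ∈ C, ∀ u, Reaches B v u → Reaches B u w → u ∈ C) (k : ℕ) :
    ∀ v w : C, 0 < (B ^ k) v.1 w.1 →
      0 < (A ^ k) v w := by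
  have hA0 : ∀ i j, 0 ≤ A i j := fun i j => by rw [hA]; exact hB _ _
  induction k with
  | zero =>
    intro v w h
    rw [pow_zero] at h ⊢
    by_cases hvw : v = w
    · subst hvw; rw [Matrix.one_apply_eq]; norm_num
    · rw [Matrix.one_apply_ne (fun h' => hvw (Subtype.ext h'))] at h
      exact absurd h (lt_irrefl _)
  | succ k ih =>
    intro v w h
    rw [pow_succ', Matrix.mul_apply] at h ⊢
    obtain ⟨u, -, hu⟩ := Finset.exists_lt_of_sum_lt (s := Finset.univ) (f := fun _ : V => (0 : ℝ))
      (by simpa using h)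
    have hBk := aux_pow_nonneg B hB k u w
    have h1 : 0 < B v u := lt_of_le_of_ne (hB _ _) (fun h => by simp [← h] at hu)
    have h2 : 0 < (B ^ k) u w := lt_of_le_of_ne hBk (fun h => by simp [← h] at hu)
    have huC : u ∈ C := hconv v v.2 w w.2 u (aux_reaches_edge B hB h1.ne') ⟨k, h2⟩
    exact Finset.sum_pos' (fun l _ => mul_nonneg (hA0 _ _) (aux_pow_nonneg A hA0 _ _ _))
      ⟨⟨u, huC⟩, Finset.mem_univ _, mul_pos (by rw [hA]; exact h1) (ih ⟨u, huC⟩ w h2)⟩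

theorem aux_sum_ind {V : Type*} [Fintype V] (S : Set V) [Fintype S] (f : V → ℝ) :
    ∑ w, S.indicator f w = ∑ i : S, f i.1 := by
  classical
  rw [Finset.sum_indicator_eq_sum_filter]
  exact Finset.sum_subtype (p := fun v => v ∈ S) _ (fun v => by simp) f

theorem aux_sum_split {V : Type*} [Fintype V] (C D : Set V) [Fintype C] [Fintype D]
    (hdisj : ∀ v ∈ D, v ∉ C) (f : V → ℝ) (h0 : ∀ v, v ∉ C → v ∉ D → f v = 0) :
    ∑ w, f w = ∑ i : C, f i.1 + ∑ i : D, f i.1 := by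
  classical
  rw [← aux_sum_ind, ← aux_sum_ind, ← Finset.sum_add_distrib]
  refine Finset.sum_congr rfl fun v _ => ?_
  by_cases h1 : v ∈ C
  · have h2 : v ∉ D := fun h => hdisj v h h1
    simp [h1, h2]
  · by_cases h2 : v ∈ D
    · simp [h1, h2]
    · simp [h1, h2, h0 v h1 h2]

/-- For a `B`-harmonic component `C` there is a unique normalized `B`-harmonic vector `φ`
with `Σ_{w ∈ C} B_{vw} φ_w = φ_v` for all `v ∈ C` and with support exactly the closure of `C`. -/
theorem harmonicComponent_phi {V : Type*} [Fintype V] [Nonempty V] [DecidableEq V]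
    (B : Matrix V V ℝ) (hB : ∀ v w, 0 ≤ B v w)
    (C : Set V) (hC : IsHarmonicComponent B C) :
    ∃! φ : V → ℝ, IsPhiC B C φ := by
  classical
  obtain ⟨⟨⟨v0, hv0⟩, -⟩, hρC, hρD⟩ := hC
  have hmemC : ∀ w, w ∈ C ↔ Reaches B v0 w ∧ Reaches B w v0 := fun w => by rw [hv0]; rfl
  have hv0C : v0 ∈ C := (hmemC v0).2 ⟨aux_reaches_refl B v0, aux_reaches_refl B v0⟩
  have hconv : ∀ v ∈ C, ∀ w ∈ C, ∀ u, Reaches B v u → Reaches B u w → u ∈ C := by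
    intro v hv w hw u h1 h2
    rw [hmemC] at hv hw ⊢
    exact ⟨aux_reaches_trans B hB hv.1 h1, aux_reaches_trans B hB h2 hw.2⟩
  have : Nonempty C := ⟨⟨v0, hv0C⟩⟩
  set D : Set V := closureSet B C \ C with hD
  have hDC : ∀ v ∈ D, v ∉ C := fun v hv => hv.2
  have hCcl : ∀ v ∈ C, v ∈ closureSet B C := fun v hv => ⟨v, hv, aux_reaches_refl B v⟩
  have hncl : ∀ v, v ∉ closureSet B C → v ∉ C ∧ v ∉ D :=
    fun v hv => ⟨fun h => hv (hCcl v h), fun h => hv h.1⟩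
  have hcl_of : ∀ v, v ∉ C → v ∉ D → v ∉ closureSet B C := fun v h1 h2 h3 => h2 ⟨h3, h1⟩
  -- edges
  have hedgeCD : ∀ v ∈ C, ∀ w ∈ D, B v w = 0 := by
    intro v hv w hw
    by_contra hne
    obtain ⟨u, hu, hwu⟩ := hw.1
    exact hw.2 (hconv v hv u hu w (aux_reaches_edge B hB hne) hwu)
  have hedge_cl : ∀ v, v ∉ closureSet B C → ∀ w ∈ closureSet B C, B v w = 0 := by
    intro v hv w hw
    by_contra hne
    obtain ⟨u, hu, hwu⟩ := hw
    exact hv ⟨u, hu, aux_reaches_trans B hB (aux_reaches_edge B hB hne) hwu⟩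
  -- the matrix on C
  set A : Matrix C C ℝ := fun i j : C => B i.1 j.1 with hA
  have hA0 : ∀ i j, 0 ≤ A i j := fun i j => hB _ _
  have hirr : ∀ i j, ∃ k : ℕ, 0 < (A ^ k) i j := by
    intro i j
    obtain ⟨k, hk⟩ := aux_reaches_trans B hB ((hmemC i).1 i.2).2 ((hmemC j).1 j.2).1
    exact ⟨k, aux_irr B hB C A (fun _ _ => rfl) hconv k i j hk⟩
  have hρA : specRad A = 1 := by rw [← hρC, aux_specRadOn_eq]
  -- the matrix on D
  set M : Matrix D D ℝ := fun i j : D => B i.1 j.1 with hM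
  have hM0 : ∀ i j, 0 ≤ M i j := fun i j => hB _ _
  have hsM : ∀ i j, Summable (fun k : ℕ => (M ^ k) i j) := by
    intro i j
    apply aux_decay
    have := hρD ⟨i.1, i.2⟩
    rwa [aux_specRadOn_eq] at this
  -- positivity propagation
  have hposprop : ∀ ψ : V → ℝ, (∀ v, 0 ≤ ψ v) → IsHarmonic B ψ → (∀ v ∈ C, 0 < ψ v) →
      ∀ v ∈ closureSet B C, 0 < ψ v := by
    intro ψ h0 hh hc v hv
    obtain ⟨w, hw, k, hk⟩ := hv
    have h1 := congrFun (aux_pow_mulVec B 1 ψ (by rw [one_smul]; exact funext hh) k) v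
    rw [one_pow, one_smul] at h1
    rw [← h1]
    exact Finset.sum_pos' (fun l _ => mul_nonneg (aux_pow_nonneg B hB _ _ _) (h0 _))
      ⟨w, Finset.mem_univ _, mul_pos hk (hc w hw)⟩
  have hunique : ∀ φ φ' : V → ℝ, IsPhiC B C φ → IsPhiC B C φ' → φ' = φ := by
    rintro φ φ' ⟨h0, h1, hh, hc, hs⟩ ⟨h0', h1', hh', hc', hs'⟩
    have hpos : ∀ i : C, 0 < φ i := fun i =>
      lt_of_le_of_ne (h0 i) (Ne.symm ((hs i).2 (hCcl i i.2)))
    have hAx : A.mulVec (fun i : C => φ i) = fun i : C => φ i := by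
      funext i
      rw [← hc i i.2, aux_sum_ind]
      rfl
    have hAy : A.mulVec (fun i : C => φ' i) = fun i : C => φ' i := by
      funext i
      rw [← hc' i i.2, aux_sum_ind]
      rfl
    obtain ⟨t, ht⟩ := aux_perron_unique A hA0 hirr _ _ hpos hAx hAy
    have hzC : ∀ v ∈ C, φ' v - t * φ v = 0 := fun v hv => by
      have := congrFun ht ⟨v, hv⟩
      simp only [Pi.smul_apply, smul_eq_mul] at this
      rw [this, sub_self]
    have hzn : ∀ v, v ∉ closureSet B C → φ' v - t * φ v = 0 := fun v hv => by
      have e1 : φ v = 0 := by_contra fun h => hv ((hs v).1 h)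
      have e2 : φ' v = 0 := by_contra fun h => hv ((hs' v).1 h)
      rw [e1, e2]; ring
    have hzD : (fun i : D => φ' i - t * φ i) = 0 := by
      apply aux_fix_zero M hsM
      funext i
      have e : ∑ w, B i w * (φ' w - t * φ w) = φ' i - t * φ i := by
        rw [← hh' i, ← hh i, Finset.mul_sum, ← Finset.sum_sub_distrib]
        exact Finset.sum_congr rfl fun w _ => by ring
      rw [aux_sum_split C D hDC _ (fun v h1 h2 => by rw [hzn v (hcl_of v h1 h2), mul_zero]),
        Finset.sum_eq_zero (fun j _ => by rw [hzC j j.2, mul_zero]), zero_add] at e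
      exact e
    have hz : ∀ v, φ' v = t * φ v := by
      intro v
      rw [← sub_eq_zero]
      by_cases h1 : v ∈ C
      · exact hzC v h1
      · by_cases h2 : v ∈ D
        · exact congrFun hzD ⟨v, h2⟩
        · exact hzn v (hcl_of v h1 h2)
    have ht1 : t = 1 := by
      have : ∑ v, φ' v = t * ∑ v, φ v := by
        rw [Finset.mul_sum]; exact Finset.sum_congr rfl fun v _ => hz v
      rw [h1, h1', mul_one] at this
      exact this.symm
    funext v
    rw [hz v, ht1, one_mul]
  -- existence
  obtain ⟨t, ht0, x, hx, hAx⟩ := aux_perron A hA0 hirr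
  have ht1 : t = 1 := by rw [← hρA, aux_specRad_eq A hA0 t ht0 x hx hAx]
  rw [ht1, one_smul] at hAx
  obtain ⟨y, hy0, hy⟩ := aux_solve M hM0 hsM (fun i => ∑ j : C, B i j * x j)
    (fun i => Finset.sum_nonneg fun j _ => mul_nonneg (hB _ _) (hx j).le)
  let ψ : V → ℝ := fun v => if h : v ∈ C then x ⟨v, h⟩ else if h : v ∈ D then y ⟨v, h⟩ else 0
  have hψC : ∀ i : C, ψ i = x i := fun i => by
    simp only [ψ]; rw [dif_pos i.2]
  have hψD : ∀ i : D, ψ i = y i := fun i => by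
    simp only [ψ]; rw [dif_neg (hDC i i.2), dif_pos i.2]
  have hψn : ∀ v, v ∉ C → v ∉ D → ψ v = 0 := fun v h1 h2 => by
    simp only [ψ]; rw [dif_neg h1, dif_neg h2]
  have hψ0 : ∀ v, 0 ≤ ψ v := by
    intro v
    by_cases h1 : v ∈ C
    · exact (hψC ⟨v, h1⟩).symm ▸ (hx ⟨v, h1⟩).le
    · by_cases h2 : v ∈ D
      · exact (hψD ⟨v, h2⟩).symm ▸ hy0 ⟨v, h2⟩
      · exact (hψn v h1 h2).ge
  have hsplit : ∀ v, ∑ w, B v w * ψ w = ∑ j : C, B v j * x j + ∑ j : D, B v j * y j := by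
    intro v
    rw [aux_sum_split C D hDC _ (fun w h1 h2 => by rw [hψn w h1 h2, mul_zero])]
    simp only [hψC, hψD]
  have hψh : IsHarmonic B ψ := by
    intro v
    rw [hsplit]
    by_cases h1 : v ∈ C
    · rw [Finset.sum_eq_zero (s := (Finset.univ : Finset D))
        (fun j _ => by rw [hedgeCD v h1 j j.2, zero_mul]), add_zero]
      exact (congrFun hAx ⟨v, h1⟩).trans (hψC ⟨v, h1⟩).symm
    · by_cases h2 : v ∈ D
      · exact ((hψD ⟨v, h2⟩).trans (hy ⟨v, h2⟩)).symm
      · have h3 := hcl_of v h1 h2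
        rw [hψn v h1 h2, Finset.sum_eq_zero
          (fun j _ => by rw [hedge_cl v h3 j (hCcl j j.2), zero_mul]),
          Finset.sum_eq_zero (fun j _ => by rw [hedge_cl v h3 j j.2.1, zero_mul]), add_zero]
  have hψCpos : ∀ v ∈ C, 0 < ψ v := fun v hv => (hψC ⟨v, hv⟩).symm ▸ hx ⟨v, hv⟩
  have hψpos := hposprop ψ hψ0 hψh hψCpos
  set s := ∑ v, ψ v with hs
  have hspos : 0 < s := Finset.sum_pos' (fun v _ => hψ0 v) ⟨v0, Finset.mem_univ _, hψCpos v0 hv0C⟩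
  have hφ : IsPhiC B C (fun v => s⁻¹ * ψ v) := by
    refine ⟨fun v => mul_nonneg (inv_nonneg.2 hspos.le) (hψ0 v), ?_, fun v => ?_, fun v hv => ?_,
      fun v => ⟨fun h => ?_, fun h => ?_⟩⟩
    · rw [← Finset.mul_sum, ← hs, inv_mul_cancel₀ hspos.ne']
    · beta_reduce
      rw [← hψh v, Finset.mul_sum]
      exact Finset.sum_congr rfl fun w _ => by ring
    · have e : ψ v = x ⟨v, hv⟩ := hψC ⟨v, hv⟩
      rw [aux_sum_ind]
      beta_reduce
      rw [e, ← congrFun hAx ⟨v, hv⟩, Matrix.mulVec, dotProduct,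
        Finset.mul_sum]
      exact Finset.sum_congr rfl fun w _ => by rw [hψC w]; simp only [hA]; ring
    · by_contra hn
      exact h (by beta_reduce; rw [hψn v (hncl v hn).1 (hncl v hn).2, mul_zero])
    · exact (mul_pos (inv_pos.2 hspos) (hψpos v h)).ne'
  exact ⟨_, hφ, fun φ' h' => hunique _ _ hφ h'⟩
end

section
/- Let ψ ∈ [0,1]^V be a normalized B-harmonic vector. Then there are a unique collection 𝒞 of B-harmonic components of B and unique positive numbers t_C ∈ (0,1] for C ∈ 𝒞 such that ψ = Σ_{C∈𝒞} t_C φ^C. -/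
open Filter Finset

variable {V : Type*} [Fintype V]

set_option linter.unusedSectionVars false
namespace HD

section Mat
variable {n : Type*} [Fintype n] [DecidableEq n]

lemma pow_nonneg' (M : Matrix n n ℝ) (hM : ∀ i j, 0 ≤ M i j) (k : ℕ) : ∀ i j, 0 ≤ (M ^ k) i j := by
  induction k with
  | zero => intro i j; rw [pow_zero, Matrix.one_apply]; split_ifs <;> norm_num
  | succ k ih =>
    intro i j
    rw [pow_succ, Matrix.mul_apply]
    exact Finset.sum_nonneg fun l _ => mul_nonneg (ih i l) (hM l j)

/-- entrywise l1 norm of powers -/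
noncomputable def nrm (M : Matrix n n ℝ) (k : ℕ) : ℝ := ∑ i, ∑ j, |(M ^ k) i j|

lemma nrm_nonneg (M : Matrix n n ℝ) (k : ℕ) : 0 ≤ nrm M k :=
  Finset.sum_nonneg fun _ _ => Finset.sum_nonneg fun _ _ => abs_nonneg _

lemma specRad_eq (M : Matrix n n ℝ) :
    specRad M = Filter.limsup (fun k : ℕ => (nrm M k) ^ ((1 : ℝ) / (k : ℝ))) Filter.atTop := rfl

lemma entry_le_nrm (M : Matrix n n ℝ) (k : ℕ) (i j : n) : |(M ^ k) i j| ≤ nrm M k := by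
  unfold nrm
  calc |(M ^ k) i j| ≤ ∑ j, |(M ^ k) i j| :=
        Finset.single_le_sum (f := fun j => |(M ^ k) i j|) (fun _ _ => abs_nonneg _) (Finset.mem_univ j)
    _ ≤ _ := Finset.single_le_sum (f := fun i => ∑ j, |(M ^ k) i j|)
        (fun _ _ => Finset.sum_nonneg fun _ _ => abs_nonneg _) (Finset.mem_univ i)

lemma nrm_succ_le (M : Matrix n n ℝ) (k : ℕ) : nrm M (k + 1) ≤ nrm M k * nrm M 1 := by
  have h : ∀ i j, |(M ^ (k+1)) i j| ≤ ∑ l, |(M ^ k) i l| * |M l j| := by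
    intro i j
    rw [pow_succ, Matrix.mul_apply]
    refine (Finset.abs_sum_le_sum_abs _ _).trans (le_of_eq ?_)
    exact Finset.sum_congr rfl fun l _ => abs_mul _ _
  calc nrm M (k+1) ≤ ∑ i, ∑ j, ∑ l, |(M ^ k) i l| * |M l j| :=
        Finset.sum_le_sum fun i _ => Finset.sum_le_sum fun j _ => h i j
    _ = ∑ i, ∑ l, |(M ^ k) i l| * ∑ j, |M l j| := by
        refine Finset.sum_congr rfl fun i _ => ?_
        rw [Finset.sum_comm]
        exact Finset.sum_congr rfl fun l _ => (Finset.mul_sum _ _ _).symm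
    _ ≤ ∑ i, ∑ l, |(M ^ k) i l| * nrm M 1 := by
        refine Finset.sum_le_sum fun i _ => Finset.sum_le_sum fun l _ => ?_
        refine mul_le_mul_of_nonneg_left ?_ (abs_nonneg _)
        unfold nrm
        rw [pow_one]
        exact Finset.single_le_sum (f := fun l => ∑ j, |M l j|)
          (fun _ _ => Finset.sum_nonneg fun _ _ => abs_nonneg _) (Finset.mem_univ l)
    _ = _ := by
        unfold nrm
        simp only [Finset.sum_mul]

lemma nrm_le_pow (M : Matrix n n ℝ) (k : ℕ) : nrm M (k + 1) ≤ nrm M 1 ^ (k + 1) := by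
  induction k with
  | zero => simp
  | succ k ih =>
    rw [pow_succ]
    exact (nrm_succ_le M (k+1)).trans (mul_le_mul_of_nonneg_right ih (nrm_nonneg _ _))

lemma root_nonneg (M : Matrix n n ℝ) (k : ℕ) : 0 ≤ (nrm M k) ^ ((1 : ℝ) / (k : ℝ)) :=
  Real.rpow_nonneg (nrm_nonneg _ _) _

lemma root_bdd (M : Matrix n n ℝ) :
    Filter.IsBoundedUnder (· ≤ ·) atTop (fun k : ℕ => (nrm M k) ^ ((1 : ℝ) / (k : ℝ))) := by
  refine ⟨nrm M 1, ?_⟩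
  rw [Filter.eventually_map]
  filter_upwards [eventually_ge_atTop 1] with k hk
  obtain ⟨m, rfl⟩ : ∃ m, k = m + 1 := ⟨k - 1, by omega⟩
  calc (nrm M (m+1)) ^ ((1 : ℝ) / ((m+1 : ℕ) : ℝ)) ≤ (nrm M 1 ^ (m+1)) ^ ((1 : ℝ) / ((m+1 : ℕ) : ℝ)) :=
        Real.rpow_le_rpow (nrm_nonneg _ _) (nrm_le_pow M m) (by positivity)
    _ = nrm M 1 := by
        rw [one_div]
        exact Real.pow_rpow_inv_natCast (nrm_nonneg _ _) (by omega)

lemma root_cobdd (M : Matrix n n ℝ) :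
    Filter.IsCoboundedUnder (· ≤ ·) atTop (fun k : ℕ => (nrm M k) ^ ((1 : ℝ) / (k : ℝ))) :=
  Filter.isCoboundedUnder_le_of_le atTop (x := 0) (fun k => root_nonneg M k)

lemma specRad_lt_imp (M : Matrix n n ℝ) {r : ℝ} (h : specRad M < r) :
    ∀ᶠ k : ℕ in atTop, nrm M k ≤ r ^ k := by
  rw [specRad_eq] at h
  filter_upwards [eventually_lt_of_limsup_lt h (root_bdd M), eventually_ge_atTop 1] with k hk h1
  have := pow_le_pow_left₀ (root_nonneg M k) hk.le k
  rwa [one_div, Real.rpow_inv_natCast_pow (nrm_nonneg _ _) (by omega)] at this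

lemma mulVec_mono (M : Matrix n n ℝ) (hM : ∀ i j, 0 ≤ M i j) {x y : n → ℝ} (h : ∀ i, x i ≤ y i) (i : n) :
    ∑ j, M i j * x j ≤ ∑ j, M i j * y j :=
  Finset.sum_le_sum fun j _ => mul_le_mul_of_nonneg_left (h j) (hM i j)

lemma specRad_lt_of (M : Matrix n n ℝ) (hM : ∀ i j, 0 ≤ M i j) {r : ℝ} (hr : 0 < r) (y : n → ℝ)
    (hy : ∀ i, 0 < y i) (h : ∀ i, ∑ j, M i j * y j < r * y i) : specRad M < r := by
  obtain ⟨θ, hθ, hθ0, hθr⟩ : ∃ θ, (∀ i, ∑ j, M i j * y j ≤ θ * y i) ∧ 0 < θ ∧ θ < r := by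
    have h1 : ∀ᶠ θ in nhdsWithin r (Set.Iio r), ∀ i, ∑ j, M i j * y j ≤ θ * y i := by
      rw [Filter.eventually_all]
      intro i
      have hc : Filter.Tendsto (fun θ : ℝ => θ * y i) (nhds r) (nhds (r * y i)) :=
        (continuous_id.mul continuous_const).tendsto r
      exact ((hc.eventually_const_lt (h i)).filter_mono nhdsWithin_le_nhds).mono fun _ hh => le_of_lt hh
    have h2 : ∀ᶠ θ in nhdsWithin r (Set.Iio r), 0 < θ :=
      (eventually_gt_nhds hr).filter_mono nhdsWithin_le_nhds
    have h3 : ∀ᶠ θ in nhdsWithin r (Set.Iio r), θ < r := eventually_mem_nhdsWithin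
    exact (h1.and (h2.and h3)).exists
  have hpow : ∀ k : ℕ, ∀ i, ∑ j, (M ^ k) i j * y j ≤ θ ^ k * y i := by
    intro k
    induction k with
    | zero => intro i; simp [Matrix.one_apply]
    | succ k ih =>
      intro i
      calc ∑ j, (M ^ (k+1)) i j * y j = ∑ l, M i l * ∑ j, (M ^ k) l j * y j := by
            simp only [pow_succ', Matrix.mul_apply, Finset.sum_mul, Finset.mul_sum]
            rw [Finset.sum_comm]
            simp only [mul_assoc]
        _ ≤ ∑ l, M i l * (θ ^ k * y l) := mulVec_mono M hM ih i
        _ = θ ^ k * ∑ l, M i l * y l := by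
            rw [Finset.mul_sum]; exact Finset.sum_congr rfl fun l _ => by ring
        _ ≤ θ ^ k * (θ * y i) := mul_le_mul_of_nonneg_left (hθ i) (by positivity)
        _ = _ := by ring
  set b : ℝ := (∑ i, ∑ j, y i / y j) + 1 with hb
  have hb0 : 0 < b := by
    have : 0 ≤ ∑ i, ∑ j, y i / y j :=
      Finset.sum_nonneg fun i _ => Finset.sum_nonneg fun j _ => (div_pos (hy i) (hy j)).le
    linarith
  have hn : ∀ k : ℕ, nrm M k ≤ b * θ ^ k := by
    intro k
    have : nrm M k ≤ ∑ i, ∑ j, (y i / y j) * θ ^ k := by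
      refine Finset.sum_le_sum fun i _ => Finset.sum_le_sum fun j _ => ?_
      rw [abs_of_nonneg (pow_nonneg' M hM k i j)]
      have h1 : (M ^ k) i j * y j ≤ θ ^ k * y i :=
        (Finset.single_le_sum (f := fun j => (M ^ k) i j * y j)
          (fun j _ => mul_nonneg (pow_nonneg' M hM k i j) (hy j).le) (Finset.mem_univ j)).trans (hpow k i)
      rw [div_mul_eq_mul_div, le_div_iff₀ (hy j)]
      linarith
    simp only [← Finset.sum_mul] at this
    refine this.trans (mul_le_mul_of_nonneg_right (by linarith) (by positivity))
  have ht : Filter.Tendsto (fun k : ℕ => b ^ ((1:ℝ) / (k:ℝ)) * θ) atTop (nhds θ) := by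
    have h0 : Filter.Tendsto (fun k : ℕ => (1:ℝ) / (k:ℝ)) atTop (nhds 0) := tendsto_one_div_atTop_nhds_zero_nat
    have h1 := (Real.continuousAt_const_rpow (a := b) (b := 0) hb0.ne').tendsto.comp h0
    simpa using h1.mul_const θ
  have hle : specRad M ≤ θ := by
    rw [specRad_eq, ← ht.limsup_eq]
    refine Filter.limsup_le_limsup ?_ (root_cobdd M) ht.isBoundedUnder_le
    filter_upwards [eventually_ge_atTop 1] with k hk
    calc nrm M k ^ ((1:ℝ) / (k:ℝ)) ≤ (b * θ ^ k) ^ ((1:ℝ) / (k:ℝ)) :=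
          Real.rpow_le_rpow (nrm_nonneg _ _) (hn k) (by positivity)
      _ = _ := by
          rw [Real.mul_rpow hb0.le (by positivity), one_div, Real.pow_rpow_inv_natCast hθ0.le (by omega)]
  exact hle.trans_lt hθr

lemma neumann (M : Matrix n n ℝ) (hM : ∀ i j, 0 ≤ M i j) {r μ : ℝ} (hμ : 0 ≤ μ) (hr : 0 ≤ r)
    (h : specRad M < r) (hμr : μ * r < 1) (b : n → ℝ) (hb : ∀ i, 0 ≤ b i) :
    ∃ y : n → ℝ, (∀ i, 0 ≤ y i) ∧ ∀ i, y i = b i + μ * ∑ j, M i j * y j := by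
  have hs : ∀ i j, Summable fun k : ℕ => μ ^ k * (M ^ k) i j := by
    intro i j
    refine Summable.of_norm_bounded_eventually_nat (g := fun k => (μ * r) ^ k)
      (summable_geometric_of_lt_one (by positivity) hμr) ?_
    filter_upwards [specRad_lt_imp M h] with k hk
    rw [Real.norm_eq_abs, abs_mul, abs_of_nonneg (pow_nonneg hμ k), mul_pow]
    exact mul_le_mul_of_nonneg_left ((entry_le_nrm M k i j).trans hk) (by positivity)
  have hs' : ∀ i, Summable fun k : ℕ => ∑ j, μ ^ k * (M ^ k) i j * b j := fun i =>
    summable_sum fun j _ => (hs i j).mul_right _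
  refine ⟨fun i => ∑' k : ℕ, ∑ j, μ ^ k * (M ^ k) i j * b j, fun i => tsum_nonneg fun k =>
    Finset.sum_nonneg fun j _ => mul_nonneg (mul_nonneg (pow_nonneg hμ k) (pow_nonneg' M hM k i j)) (hb j), ?_⟩
  intro i
  dsimp only
  rw [(hs' i).tsum_eq_zero_add]
  congr 1
  · simp [Matrix.one_apply]
  · simp only [← tsum_mul_left]
    rw [← Summable.tsum_finsetSum (fun j _ => (hs' j).mul_left _), ← tsum_mul_left]
    congr 1
    ext k
    simp only [pow_succ' M, Matrix.mul_apply, Finset.sum_mul, Finset.mul_sum]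
    rw [Finset.sum_comm]
    refine Finset.sum_congr rfl fun l _ => Finset.sum_congr rfl fun j _ => ?_
    ring

lemma perron (M : Matrix n n ℝ) (hM : ∀ i j, 0 ≤ M i j) (hρ : 0 < specRad M) :
    ∃ z : n → ℝ, (∀ i, 0 ≤ z i) ∧ (∃ i, 0 < z i) ∧ ∀ i, ∑ j, M i j * z j = specRad M * z i := by
  set ρ := specRad M with hρd
  have hne : Nonempty n := by
    by_contra hc
    rw [not_nonempty_iff] at hc
    have := specRad_lt_of M hM hρ (fun _ => 1) (fun i => hc.elim i) (fun i => hc.elim i)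
    exact lt_irrefl _ this
  have hex : ∀ m : ℕ, ∃ p : (n → ℝ) × ℝ, p ∈ stdSimplex ℝ n ×ˢ Set.Icc (0:ℝ) 1 ∧
      ∀ i, (ρ + 1 / ((m:ℝ) + 1)) * p.1 i = (ρ + 1 / ((m:ℝ) + 1)) * p.2 + ∑ j, M i j * p.1 j := by
    intro m
    set e : ℝ := 1 / ((m:ℝ) + 1) with he
    have he0 : 0 < e := by positivity
    obtain ⟨y, hy0, hy⟩ := neumann M hM (r := ρ + e / 2) (μ := 1 / (ρ + e)) (by positivity) (by positivity)
      (by linarith) (by rw [one_div_mul_eq_div, div_lt_one (by positivity)]; linarith) (fun _ => 1) (fun _ => zero_le_one)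
    have hy1 : ∀ i, 1 ≤ y i := by
      intro i
      rw [hy i]
      have : 0 ≤ 1 / (ρ + e) * ∑ j, M i j * y j :=
        mul_nonneg (by positivity) (Finset.sum_nonneg fun j _ => mul_nonneg (hM i j) (hy0 j))
      linarith
    set s := ∑ i, y i with hs
    have hs1 : 1 ≤ s := (hy1 hne.some).trans
      (Finset.single_le_sum (f := y) (fun i _ => hy0 i) (Finset.mem_univ hne.some))
    have hs0 : 0 < s := by linarith
    refine ⟨(fun i => y i / s, 1 / s), ⟨⟨fun i => div_nonneg (hy0 i) hs0.le, ?_⟩, ?_, ?_⟩, ?_⟩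
    · rw [← Finset.sum_div]; exact div_self hs0.ne'
    · positivity
    · rw [div_le_one hs0]; exact hs1
    · intro i
      have hpos : (ρ + e) ≠ 0 := by positivity
      have : ∑ j, M i j * (y j / s) = (∑ j, M i j * y j) / s := by
        rw [Finset.sum_div]; exact Finset.sum_congr rfl fun j _ => by ring
      dsimp only
      rw [this]
      have h2 := hy i
      field_simp at h2 ⊢
      linarith
  choose p hpK hp using hex
  have hK : IsCompact (stdSimplex ℝ n ×ˢ Set.Icc (0:ℝ) 1) := (isCompact_stdSimplex ℝ n).prod isCompact_Icc
  obtain ⟨⟨z, c⟩, ⟨⟨hz0, hz1⟩, hc0, hc1⟩, φ, hφ, hlim⟩ := hK.tendsto_subseq hpK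
  have hl1 : ∀ i, Filter.Tendsto (fun m => (p (φ m)).1 i) atTop (nhds (z i)) := by
    intro i
    have : Continuous fun q : (n → ℝ) × ℝ => q.1 i := by fun_prop
    exact (this.tendsto (z, c)).comp hlim
  have hl2 : Filter.Tendsto (fun m => (p (φ m)).2) atTop (nhds c) :=
    (continuous_snd.tendsto (z, c)).comp hlim
  have hle : Filter.Tendsto (fun m => ρ + 1 / (((φ m : ℕ) : ℝ) + 1)) atTop (nhds ρ) := by
    have := (tendsto_one_div_add_atTop_nhds_zero_nat (𝕜 := ℝ)).comp hφ.tendsto_atTop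
    simpa using this.const_add ρ
  have heq : ∀ i, ρ * z i = ρ * c + ∑ j, M i j * z j := by
    intro i
    have h1 := hle.mul (hl1 i)
    have h2 := (hle.mul hl2).add (tendsto_finsetSum Finset.univ fun j _ => (hl1 j).const_mul (M i j))
    refine tendsto_nhds_unique h1 (h2.congr fun m => ?_)
    exact (hp (φ m) i).symm
  dsimp only at hz0 hz1 hc0 hc1
  rcases hc0.eq_or_lt with hc | hc
  · refine ⟨z, hz0, ?_, fun i => ?_⟩
    · by_contra hcon
      push Not at hcon
      have : ∑ i, z i ≤ 0 := Finset.sum_nonpos fun i _ => hcon i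
      linarith
    · rw [heq i, ← hc]; ring
  · exfalso
    have hρc : 0 < ρ * c := by positivity
    have hzp : ∀ i, 0 < z i := by
      intro i
      have h1 : 0 ≤ ∑ j, M i j * z j := Finset.sum_nonneg fun j _ => mul_nonneg (hM i j) (hz0 j)
      have h2 : 0 < ρ * z i := by rw [heq i]; linarith
      exact pos_of_mul_pos_right h2 hρ.le
    have := specRad_lt_of M hM hρ z hzp (fun i => by rw [heq i]; linarith)
    exact lt_irrefl _ this

lemma no_sub (M : Matrix n n ℝ) (hM : ∀ i j, 0 ≤ M i j) (h : specRad M < 1) (x : n → ℝ)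
    (hx : ∀ i, x i ≤ ∑ j, M i j * x j) (i : n) : x i ≤ 0 := by
  by_contra hc
  push Not at hc
  obtain ⟨r, hr1, hr2⟩ := exists_between (max_lt h zero_lt_one)
  obtain ⟨y, hy0, hy⟩ := neumann M hM (r := r) (μ := 1) zero_le_one
    ((le_max_right _ _).trans hr1.le) ((le_max_left _ _).trans_lt hr1) (by simpa using hr2) (fun _ => 1) (fun _ => zero_le_one)
  have hyp : ∀ i, ∑ j, M i j * y j < y i := fun i => by have := hy i; linarith
  have hy1 : ∀ i, 0 < y i := fun i =>
    (Finset.sum_nonneg fun j _ => mul_nonneg (hM i j) (hy0 j)).trans_lt (hyp i)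
  obtain ⟨m, -, hm⟩ := Finset.exists_max_image Finset.univ (fun i => x i / y i) ⟨i, Finset.mem_univ i⟩
  set K := x m / y m with hK
  have hK0 : 0 < K := (div_pos hc (hy1 i)).trans_le (hm i (Finset.mem_univ i))
  have hb : ∀ j, x j ≤ K * y j := fun j => (div_le_iff₀ (hy1 j)).1 (hm j (Finset.mem_univ j))
  have h1 := hx m
  have h2 := mulVec_mono M hM hb m
  have h3 : ∑ j, M m j * (K * y j) = K * ∑ j, M m j * y j := by
    rw [Finset.mul_sum]; exact Finset.sum_congr rfl fun l _ => by ring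
  have h4 : x m = K * y m := by rw [hK, div_mul_cancel₀ _ (hy1 m).ne']
  have h5 := mul_lt_mul_of_pos_left (hyp m) hK0
  linarith

end Mat

section Graph

lemma sum_sub {V : Type*} [Fintype V] (S : Set V) [Fintype S] (g : V → ℝ) (hg : ∀ w, w ∉ S → g w = 0) :
    ∑ i : S, g i = ∑ w, g w := by
  rw [← tsum_fintype (L := .unconditional _), ← tsum_fintype (L := .unconditional _)]
  refine tsum_subtype_eq_of_support_subset ?_
  intro w hw
  by_contra hc
  exact hw (hg w hc)

lemma specRadOn_def {V : Type*} [Fintype V] (B : Matrix V V ℝ) (S : Set V) :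
    ∃ (_ : Fintype S) (_ : DecidableEq S), specRadOn B S = specRad (n := S) (fun i j => B i.1 j.1) :=
  ⟨(Set.toFinite S).fintype, Classical.decEq _, rfl⟩

/-- extension by zero -/
noncomputable def ext0 {V : Type*} (S : Set V) (z : S → ℝ) : V → ℝ := by
  classical exact fun v => if h : v ∈ S then z ⟨v, h⟩ else 0

lemma ext0_mem {V : Type*} (S : Set V) (z : S → ℝ) (i : S) : ext0 S z i = z i := by
  simp [ext0]

lemma ext0_not {V : Type*} (S : Set V) (z : S → ℝ) (v : V) (h : v ∉ S) : ext0 S z v = 0 := by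
  simp [ext0, h]

lemma ext0_nonneg {V : Type*} (S : Set V) (z : S → ℝ) (hz : ∀ i, 0 ≤ z i) (v : V) : 0 ≤ ext0 S z v := by
  by_cases h : v ∈ S
  · exact (ext0_mem S z ⟨v, h⟩).symm ▸ hz _
  · rw [ext0_not S z v h]

lemma ext0_sum {V : Type*} [Fintype V] (B : Matrix V V ℝ) (S : Set V) [Fintype S] (z : S → ℝ) (v : V) :
    ∑ w, B v w * ext0 S z w = ∑ j : S, B v j * z j := by
  rw [← sum_sub S (fun w => B v w * ext0 S z w) (fun w hw => by rw [ext0_not S z w hw, mul_zero])]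
  exact Finset.sum_congr rfl fun j _ => by rw [ext0_mem]

variable {V : Type*} [Fintype V] [DecidableEq V] (B : Matrix V V ℝ)

lemma on_perron (hB : ∀ v w, 0 ≤ B v w) (S : Set V) (hρ : 0 < specRadOn B S) :
    ∃ z : V → ℝ, (∀ v, 0 ≤ z v) ∧ (∀ v, v ∉ S → z v = 0) ∧ (∃ v, 0 < z v) ∧
      ∀ v ∈ S, ∑ w, B v w * z w = specRadOn B S * z v := by
  obtain ⟨i1, i2, h⟩ := specRadOn_def B S
  rw [h] at hρ
  obtain ⟨z, hz0, ⟨i, hi⟩, hz⟩ := perron (n := S) (fun i j => B i.1 j.1) (fun i j => hB i j) hρ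
  refine ⟨ext0 S z, ext0_nonneg S z hz0, ext0_not S z, ⟨i, by rwa [ext0_mem]⟩, ?_⟩
  intro v hv
  have h1 := hz ⟨v, hv⟩
  rw [ext0_sum, h, show ext0 S z v = z ⟨v, hv⟩ from ext0_mem S z ⟨v, hv⟩]
  exact h1

lemma on_neumann (hB : ∀ v w, 0 ≤ B v w) (S : Set V) (h1 : specRadOn B S < 1) (b : V → ℝ) (hb : ∀ v, 0 ≤ b v) :
    ∃ y : V → ℝ, (∀ v, 0 ≤ y v) ∧ (∀ v, v ∉ S → y v = 0) ∧
      ∀ v ∈ S, y v = b v + ∑ w, B v w * y w := by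
  obtain ⟨i1, i2, h⟩ := specRadOn_def B S
  rw [h] at h1
  obtain ⟨r, hr1, hr2⟩ := exists_between (max_lt h1 zero_lt_one)
  obtain ⟨y, hy0, hy⟩ := neumann (n := S) (fun i j => B i.1 j.1) (fun i j => hB i j) (r := r) (μ := 1)
    zero_le_one ((le_max_right _ _).trans hr1.le) ((le_max_left _ _).trans_lt hr1) (by simpa using hr2)
    (fun i => b i) (fun i => hb i)
  refine ⟨ext0 S y, ext0_nonneg S y hy0, ext0_not S y, ?_⟩
  intro v hv
  have h1 := hy ⟨v, hv⟩
  rw [ext0_sum, show ext0 S y v = y ⟨v, hv⟩ from ext0_mem S y ⟨v, hv⟩]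
  rw [one_mul] at h1
  exact h1

lemma on_no_sub (hB : ∀ v w, 0 ≤ B v w) (S : Set V) (h1 : specRadOn B S < 1) (x : V → ℝ) (hx0 : ∀ v, v ∉ S → x v = 0)
    (hx : ∀ v ∈ S, x v ≤ ∑ w, B v w * x w) (v : V) : x v ≤ 0 := by
  by_cases hv : v ∈ S
  · obtain ⟨i1, i2, h⟩ := specRadOn_def B S
    rw [h] at h1
    refine no_sub (n := S) (fun i j => B i.1 j.1) (fun i j => hB i j) h1 (fun i => x i) ?_ ⟨v, hv⟩
    intro i
    rw [sum_sub S (fun w => B i w * x w) (fun w hw => by rw [hx0 w hw, mul_zero])]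
    exact hx i i.2
  · rw [hx0 v hv]

lemma on_lt (hB : ∀ v w, 0 ≤ B v w) (S : Set V) {r : ℝ} (hr : 0 < r) (y : V → ℝ) (hy0 : ∀ v, v ∉ S → y v = 0)
    (hyp : ∀ v ∈ S, 0 < y v) (hy : ∀ v ∈ S, ∑ w, B v w * y w < r * y v) : specRadOn B S < r := by
  obtain ⟨i1, i2, h⟩ := specRadOn_def B S
  rw [h]
  refine specRad_lt_of (n := S) (fun i j => B i.1 j.1) (fun i j => hB i j) hr (fun i => y i)
    (fun i => hyp i i.2) ?_
  intro i
  rw [sum_sub S (fun w => B i w * y w) (fun w hw => by rw [hy0 w hw, mul_zero])]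
  exact hy i i.2

/-- the one-eigenvector determines the spectral radius -/
lemma on_eq_one (hB : ∀ v w, 0 ≤ B v w) (S : Set V) (hS : S.Nonempty) (y : V → ℝ) (hy0 : ∀ v, v ∉ S → y v = 0)
    (hyp : ∀ v ∈ S, 0 < y v) (hy : ∀ v ∈ S, ∑ w, B v w * y w = y v) : specRadOn B S = 1 := by
  apply le_antisymm
  · by_contra hc
    push Not at hc
    have := on_lt B hB S (zero_lt_one.trans hc) y hy0 hyp (fun v hv => by
      rw [hy v hv]; have := hyp v hv; nlinarith)
    exact lt_irrefl _ this
  · by_contra hc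
    push Not at hc
    obtain ⟨v, hv⟩ := hS
    exact absurd (on_no_sub B hB S hc y hy0 (fun v hv => (hy v hv).ge) v) (not_le.2 (hyp v hv))

lemma reaches_iff (hB : ∀ v w, 0 ≤ B v w) (v w : V) : Reaches B v w ↔ Relation.ReflTransGen (fun a b => 0 < B a b) v w := by
  constructor
  · rintro ⟨n, hn⟩
    induction n generalizing w with
    | zero =>
      rw [pow_zero, Matrix.one_apply] at hn
      split_ifs at hn with h
      · subst h; exact .refl
      · exact absurd hn (lt_irrefl _)
    | succ n ih =>
      rw [pow_succ, Matrix.mul_apply] at hn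
      obtain ⟨u, -, hu⟩ := Finset.exists_lt_of_sum_lt (s := Finset.univ) (f := fun _ => (0:ℝ))
        (g := fun u => (B ^ n) v u * B u w) (by simpa using hn)
      have h1 := pow_nonneg' B hB n v u
      exact .tail (ih u (pos_of_mul_pos_left hu (hB u w))) (pos_of_mul_pos_right hu h1)
  · intro h
    induction h with
    | refl => exact ⟨0, by simp⟩
    | @tail b c _ hbc ih =>
      obtain ⟨n, hn⟩ := ih
      refine ⟨n + 1, ?_⟩
      rw [pow_succ, Matrix.mul_apply]
      exact (mul_pos hn hbc).trans_le (Finset.single_le_sum (f := fun u => (B ^ n) v u * B u c)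
        (fun u _ => mul_nonneg (pow_nonneg' B hB n v u) (hB u c)) (Finset.mem_univ b))

lemma reaches_trans (hB : ∀ v w, 0 ≤ B v w) {u v w : V} (h1 : Reaches B u v) (h2 : Reaches B v w) : Reaches B u w := by
  rw [reaches_iff B hB] at *
  exact h1.trans h2

lemma reaches_edge (hB : ∀ v w, 0 ≤ B v w) {u v : V} (h1 : 0 < B u v) : Reaches B u v := ⟨1, by simpa using h1⟩

lemma reaches_refl (u : V) : Reaches B u u := ⟨0, by simp⟩

/-- backward propagation -/
lemma reaches_ind (hB : ∀ v w, 0 ≤ B v w) {P : V → Prop} {v w : V} (h : Reaches B v w) (hw : P w)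
    (hs : ∀ a b, 0 < B a b → Reaches B v a → Reaches B b w → P b → P a) : P v := by
  rw [reaches_iff B hB] at h
  have : ∀ a, Relation.ReflTransGen (fun a b => 0 < B a b) a w →
      Relation.ReflTransGen (fun a b => 0 < B a b) v a → P a := by
    intro a ha
    induction ha using Relation.ReflTransGen.head_induction_on with
    | refl => intro _; exact hw
    | head hab hbw ih =>
      intro hva
      exact hs _ _ hab ((reaches_iff B hB _ _).2 hva) ((reaches_iff B hB _ _).2 hbw) (ih (hva.tail hab))
  exact this v h .refl

lemma supp_edge (hB : ∀ v w, 0 ≤ B v w) {ψ : V → ℝ} (h0 : ∀ v, 0 ≤ ψ v) {v w : V} (hv : ∑ u, B v u * ψ u ≤ ψ v)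
    (hvw : 0 < B v w) (hw : 0 < ψ w) : 0 < ψ v :=
  ((mul_pos hvw hw).trans_le (Finset.single_le_sum (f := fun u => B v u * ψ u)
    (fun u _ => mul_nonneg (hB v u) (h0 u)) (Finset.mem_univ w))).trans_le hv

lemma supp_closed (hB : ∀ v w, 0 ≤ B v w) {ψ : V → ℝ} (h0 : ∀ v, 0 ≤ ψ v) (hh : IsHarmonic B ψ) {v w : V}
    (hvw : Reaches B v w) (hw : 0 < ψ w) : 0 < ψ v :=
  reaches_ind B hB (P := fun v => 0 < ψ v) hvw hw fun a _ hab _ _ hb => supp_edge B hB h0 (hh a).le hab hb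

lemma exists_succ (hB : ∀ v w, 0 ≤ B v w) {ψ : V → ℝ} (h0 : ∀ v, 0 ≤ ψ v) (hh : IsHarmonic B ψ) {v : V} (hv : 0 < ψ v) :
    ∃ w, 0 < B v w ∧ 0 < ψ w := by
  rw [← hh v] at hv
  obtain ⟨u, -, hu⟩ := Finset.exists_lt_of_sum_lt (s := Finset.univ) (f := fun _ => (0:ℝ))
    (g := fun u => B v u * ψ u) (by simpa using hv)
  exact ⟨u, pos_of_mul_pos_left hu (h0 u), pos_of_mul_pos_right hu (hB v u)⟩

lemma max_principle (hB : ∀ v w, 0 ≤ B v w) {ψ f : V → ℝ} (hh : IsHarmonic B ψ) (hf : ∀ v, f v ≤ ∑ w, B v w * f w)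
    {K : ℝ} (hK : ∀ v, f v ≤ K * ψ v) {v w : V} (hvw : Reaches B v w) (hv : f v = K * ψ v) :
    f w = K * ψ w := by
  rw [reaches_iff B hB] at hvw
  induction hvw with
  | refl => exact hv
  | @tail a b _ hab ih =>
    have h1 : ∑ w, B a w * f w = ∑ w, B a w * (K * ψ w) := by
      apply le_antisymm (mulVec_mono B hB hK a)
      have : ∑ w, B a w * (K * ψ w) = K * ψ a := by
        rw [← hh a, Finset.mul_sum]; exact Finset.sum_congr rfl fun l _ => by ring
      rw [this, ← ih]
      exact hf a
    have h2 := (Finset.sum_eq_sum_iff_of_le (fun w _ => mul_le_mul_of_nonneg_left (hK w) (hB a w))).1 h1 b (Finset.mem_univ b)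
    exact mul_left_cancel₀ hab.ne' h2

lemma max_exists {ψ f : V → ℝ} (h0 : ∀ v, 0 ≤ ψ v) (hf : ∀ v, ψ v = 0 → f v = 0) {v : V} (hv : 0 < f v) :
    ∃ K, 0 < K ∧ (∀ v, f v ≤ K * ψ v) ∧ ∃ w, 0 < ψ w ∧ f w = K * ψ w := by
  classical
  have hvp : 0 < ψ v := lt_of_le_of_ne (h0 v) fun h => by rw [hf v h.symm] at hv; exact lt_irrefl _ hv
  obtain ⟨m, hm1, hm⟩ := Finset.exists_max_image (Finset.univ.filter fun v => 0 < ψ v) (fun i => f i / ψ i)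
    ⟨v, by simpa using hvp⟩
  simp only [Finset.mem_filter, Finset.mem_univ, true_and] at hm1 hm
  refine ⟨f m / ψ m, (div_pos hv hvp).trans_le (hm v hvp), fun j => ?_, m, hm1, ?_⟩
  · rcases (h0 j).eq_or_lt with h | h
    · rw [hf j h.symm, ← h, mul_zero]
    · exact (div_le_iff₀ h).1 (hm j h)
  · rw [div_mul_cancel₀ _ hm1.ne']

def IsClass (C : Set V) : Prop := ∃ v, C = {w | Reaches B v w ∧ Reaches B w v}

lemma class_nonempty {C : Set V} (h : IsClass B C) : C.Nonempty := by
  obtain ⟨v, rfl⟩ := h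
  exact ⟨v, reaches_refl B v, reaches_refl B v⟩

lemma class_reach (hB : ∀ v w, 0 ≤ B v w) {C : Set V} (h : IsClass B C) {v w : V} (hv : v ∈ C) (hw : w ∈ C) : Reaches B v w := by
  obtain ⟨u, rfl⟩ := h
  exact reaches_trans B hB hv.2 hw.1

lemma class_mem (hB : ∀ v w, 0 ≤ B v w) {C : Set V} (h : IsClass B C) {v w x : V} (hv : v ∈ C) (hx : x ∈ C)
    (h1 : Reaches B v w) (h2 : Reaches B w x) : w ∈ C := by
  obtain ⟨u, rfl⟩ := h
  exact ⟨reaches_trans B hB hv.1 h1, reaches_trans B hB h2 hx.2⟩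

lemma class_eq (hB : ∀ v w, 0 ≤ B v w) {C D : Set V} (hC : IsClass B C) (hD : IsClass B D) {v : V} (hv : v ∈ C) (hv' : v ∈ D) :
    C = D := by
  ext w
  constructor
  · intro hw
    exact class_mem B hB hD hv' hv' (class_reach B hB hC hv hw) (class_reach B hB hC hw hv)
  · intro hw
    exact class_mem B hB hC hv hv (class_reach B hB hD hv' hw) (class_reach B hB hD hw hv')

lemma subset_closure {C : Set V} {v : V} (hv : v ∈ C) : v ∈ closureSet B C := ⟨v, hv, reaches_refl B v⟩

lemma closure_back (hB : ∀ v w, 0 ≤ B v w) {C : Set V} {v w : V} (hw : w ∈ closureSet B C) (h : Reaches B v w) : v ∈ closureSet B C := by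
  obtain ⟨x, hx, hwx⟩ := hw
  exact ⟨x, hx, reaches_trans B hB h hwx⟩

lemma exists_phi (hB : ∀ v w, 0 ≤ B v w) {C : Set V} (hC : IsHarmonicComponent B C) : ∃ φ, IsPhiC B C φ := by
  obtain ⟨⟨hcl, -⟩, hρ, hD⟩ := hC
  have hcl : IsClass B C := hcl
  obtain ⟨z, hz0, hzC, ⟨v0, hv0⟩, hz⟩ := on_perron B hB C (by rw [hρ]; exact zero_lt_one)
  have hv0C : v0 ∈ C := by
    by_contra h
    rw [hzC v0 h] at hv0
    exact lt_irrefl _ hv0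
  simp only [hρ, one_mul] at hz
  have hzp : ∀ v ∈ C, 0 < z v := by
    intro v hv
    refine reaches_ind B hB (P := fun v => 0 < z v) (class_reach B hB hcl hv hv0C) hv0 ?_
    intro a b hab hva hb hzb
    have haC : a ∈ C := class_mem B hB hcl hv hv0C hva (reaches_trans B hB (reaches_edge B hB hab) hb)
    exact supp_edge B hB hz0 (hz a haC).le hab hzb
  set D := closureSet B C \ C with hDd
  obtain ⟨y, hy0, hyD, hy⟩ : ∃ y : V → ℝ, (∀ v, 0 ≤ y v) ∧ (∀ v, v ∉ D → y v = 0) ∧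
      ∀ v ∈ D, y v = (∑ w, B v w * z w) + ∑ w, B v w * y w := by
    rcases D.eq_empty_or_nonempty with h | h
    · refine ⟨0, fun _ => le_rfl, fun _ _ => rfl, fun v hv => ?_⟩
      rw [h] at hv
      exact absurd hv (Set.notMem_empty v)
    · exact on_neumann B hB D (hD h) (fun v => ∑ w, B v w * z w)
        (fun v => Finset.sum_nonneg fun w _ => mul_nonneg (hB v w) (hz0 w))
  set x : V → ℝ := fun v => z v + y v with hx
  have hx0 : ∀ v, 0 ≤ x v := fun v => add_nonneg (hz0 v) (hy0 v)
  have hxC : ∀ v ∈ C, x v = z v := fun v hv => by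
    simp only [hx]; rw [hyD v (fun h => h.2 hv), add_zero]
  have hsplit : ∀ v, ∑ w, B v w * x w = (∑ w, B v w * z w) + ∑ w, B v w * y w := by
    intro v
    rw [← Finset.sum_add_distrib]
    exact Finset.sum_congr rfl fun l _ => by simp only [hx]; ring
  have hxn : ∀ v, v ∉ closureSet B C → x v = 0 := fun v hv => by
    simp only [hx]
    rw [hzC v (fun h => hv (subset_closure B h)), hyD v (fun h => hv h.1), add_zero]
  have hBz : ∀ v, ∀ w, B v w ≠ 0 → 0 < B v w := fun v w h => lt_of_le_of_ne (hB v w) h.symm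
  have hxh : IsHarmonic B x := by
    intro v
    by_cases hv : v ∈ closureSet B C
    · rw [hsplit]
      by_cases hvC : v ∈ C
      · rw [hz v hvC, hxC v hvC]
        rw [Finset.sum_eq_zero, add_zero]
        intro w _
        by_cases hb : B v w = 0
        · rw [hb, zero_mul]
        · rw [hyD w, mul_zero]
          rintro ⟨⟨u, hu, hwu⟩, hwC⟩
          exact hwC (class_mem B hB hcl hvC hu (reaches_edge B hB (hBz v w hb)) hwu)
      · rw [← hy v ⟨hv, hvC⟩]
        simp only [hx]
        rw [hzC v hvC, zero_add]
    · rw [hxn v hv]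
      refine Finset.sum_eq_zero fun w _ => ?_
      by_cases hb : B v w = 0
      · rw [hb, zero_mul]
      · rw [hxn w, mul_zero]
        exact fun h => hv (closure_back B hB h (reaches_edge B hB (hBz v w hb)))
  have hxp : ∀ v ∈ closureSet B C, 0 < x v := by
    rintro v ⟨u, hu, hvu⟩
    exact supp_closed B hB hx0 hxh hvu (by rw [hxC u hu]; exact hzp u hu)
  set s := ∑ v, x v with hs
  have hs0 : 0 < s := by
    have h1 : 0 < x v0 := by rw [hxC v0 hv0C]; exact hv0
    exact h1.trans_le (Finset.single_le_sum (f := x) (fun i _ => hx0 i) (Finset.mem_univ v0))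
  have hdiv : ∀ v, ∀ g : V → ℝ, ∑ w, B v w * (g w / s) = (∑ w, B v w * g w) / s := by
    intro v g
    rw [Finset.sum_div]; exact Finset.sum_congr rfl fun j _ => by ring
  refine ⟨fun v => x v / s, fun v => div_nonneg (hx0 v) hs0.le, ?_, ?_, ?_, ?_⟩
  · rw [← Finset.sum_div]; exact div_self hs0.ne'
  · intro v
    dsimp only
    rw [hdiv, hxh v]
  · intro v hv
    dsimp only
    have : ∑ w, Set.indicator C (fun w => B v w * (x w / s)) w = ∑ w, B v w * (z w / s) := by
      refine Finset.sum_congr rfl fun w _ => ?_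
      by_cases hw : w ∈ C
      · rw [Set.indicator_of_mem hw, hxC w hw]
      · rw [Set.indicator_of_notMem hw, hzC w hw]; simp
    rw [this, hdiv, hz v hv, hxC v hv]
  · intro v
    constructor
    · intro h
      by_contra hv
      apply h
      dsimp only
      rw [hxn v hv, zero_div]
    · intro h
      exact (div_pos (hxp v h) hs0).ne'

lemma phi_spec (hB : ∀ v w, 0 ≤ B v w) {C : Set V} (hC : IsHarmonicComponent B C) : IsPhiC B C (phiComp B C) := by
  have h := exists_phi B hB hC
  unfold phiComp
  rw [dif_pos h]
  exact h.choose_spec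

lemma phi_pos (hB : ∀ v w, 0 ≤ B v w) {C : Set V} (hC : IsHarmonicComponent B C) {v : V} (hv : v ∈ closureSet B C) :
    0 < phiComp B C v := by
  have h := phi_spec B hB hC
  exact lt_of_le_of_ne (h.1 v) ((h.2.2.2.2 v).2 hv).symm

lemma phi_zero (hB : ∀ v w, 0 ≤ B v w) {C : Set V} (hC : IsHarmonicComponent B C) {v : V} (hv : v ∉ closureSet B C) :
    phiComp B C v = 0 := by
  have h := phi_spec B hB hC
  by_contra hc
  exact hv ((h.2.2.2.2 v).1 hc)

/-- harmonic components form an antichain -/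
lemma antichain (hB : ∀ v w, 0 ≤ B v w) {C C' : Set V} (hC : IsHarmonicComponent B C) (hC' : IsHarmonicComponent B C')
    {v : V} (hv : v ∈ C') (hv' : v ∈ closureSet B C) : C' = C := by
  by_contra hne
  have hcl : IsClass B C := hC.1.1
  have hcl' : IsClass B C' := hC'.1.1
  have hsub : ∀ w ∈ C', w ∈ closureSet B C \ C := by
    intro w hw
    refine ⟨closure_back B hB hv' (class_reach B hB hcl' hw hv), fun h => hne ?_⟩
    exact class_eq B hB hcl' hcl hw h
  have hρ := hC.2.2 ⟨v, hsub v hv⟩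
  have hφ := phi_spec B hB hC'
  have hi : ∀ u, ∀ w, B u w * Set.indicator C' (phiComp B C') w =
      Set.indicator C' (fun w => B u w * phiComp B C' w) w := by
    intro u w
    by_cases hw : w ∈ C'
    · simp [hw]
    · simp [hw]
  have := on_no_sub B hB _ hρ (Set.indicator C' (phiComp B C'))
    (fun w hw => Set.indicator_of_notMem (fun h => hw (hsub w h)) _) ?_ v
  · rw [Set.indicator_of_mem hv] at this
    exact absurd (phi_pos B hB hC' (subset_closure B hv)) (not_lt.2 this)
  · intro u _
    by_cases hu : u ∈ C'
    · rw [Set.indicator_of_mem hu]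
      simp only [hi]
      exact (hφ.2.2.2.1 u hu).ge
    · rw [Set.indicator_of_notMem hu]
      exact Finset.sum_nonneg fun w _ => mul_nonneg (hB u w)
        (Set.indicator_nonneg (fun w _ => hφ.1 w) w)

/-- a representation isolates its coefficient on a component -/
lemma rep_on (hB : ∀ v w, 0 ≤ B v w) {ψ : V → ℝ} {P : Finset (Set V)} {t : Set V → ℝ}
    (hP : ∀ C ∈ P, IsHarmonicComponent B C) (hrep : ∀ v, ψ v = ∑ C ∈ P, t C * phiComp B C v)
    {C : Set V} (hC : C ∈ P) {v : V} (hv : v ∈ C) : ψ v = t C * phiComp B C v := by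
  rw [hrep v]
  refine Finset.sum_eq_single_of_mem C hC fun C' hC' hne => ?_
  rw [phi_zero B hB (hP C' hC'), mul_zero]
  exact fun h => hne (antichain B hB (hP C' hC') (hP C hC) hv h).symm

lemma rep_sub (hB : ∀ v w, 0 ≤ B v w) {ψ : V → ℝ} {P Q : Finset (Set V)} {t s : Set V → ℝ}
    (hP : ∀ C ∈ P, IsHarmonicComponent B C) (ht : ∀ C ∈ P, 0 < t C)
    (hrep : ∀ v, ψ v = ∑ C ∈ P, t C * phiComp B C v)
    (hQ : ∀ C ∈ Q, IsHarmonicComponent B C) (hs : ∀ C ∈ Q, 0 < s C)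
    (hrep' : ∀ v, ψ v = ∑ C ∈ Q, s C * phiComp B C v) : P ⊆ Q := by
  intro C hC
  have key : ∀ (P : Finset (Set V)) (t : Set V → ℝ), (∀ C ∈ P, IsHarmonicComponent B C) →
      (∀ v, ψ v = ∑ C ∈ P, t C * phiComp B C v) → ∀ v, 0 < ψ v → ∃ C ∈ P, v ∈ closureSet B C := by
    intro P t hP hrep v hv
    by_contra hc
    push Not at hc
    rw [hrep v, Finset.sum_eq_zero] at hv
    · exact lt_irrefl _ hv
    · intro C hC
      rw [phi_zero B hB (hP C hC) (hc C hC), mul_zero]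
  obtain ⟨v, hv⟩ := class_nonempty B (hP C hC).1.1
  have hψv : 0 < ψ v := by
    rw [rep_on B hB hP hrep hC hv]
    exact mul_pos (ht C hC) (phi_pos B hB (hP C hC) (subset_closure B hv))
  obtain ⟨C', hC', w, hw, hvw⟩ := key Q s hQ hrep' v hψv
  have hψw : 0 < ψ w := by
    rw [rep_on B hB hQ hrep' hC' hw]
    exact mul_pos (hs C' hC') (phi_pos B hB (hQ C' hC') (subset_closure B hw))
  obtain ⟨C'', hC'', u, hu, hwu⟩ := key P t hP hrep w hψw
  have h1 : C = C'' := antichain B hB (hP C'' hC'') (hP C hC) hv ⟨u, hu, reaches_trans B hB hvw hwu⟩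
  subst h1
  have hwC : w ∈ C := class_mem B hB (hP C hC).1.1 hv hu hvw hwu
  rw [class_eq B hB (hP C hC).1.1 (hQ C' hC').1.1 hwC hw]
  exact hC'

def Fin' (ψ : V → ℝ) (w : V) : Prop := 0 < ψ w ∧ ∀ u, 0 < ψ u → Reaches B w u → Reaches B u w

def cls (w : V) : Set V := {u | Reaches B w u ∧ Reaches B u w}

lemma exists_final (hB : ∀ v w, 0 ≤ B v w) (ψ : V → ℝ) {v : V} (hv : 0 < ψ v) : ∃ w, Reaches B v w ∧ Fin' B ψ w := by
  classical
  let T : V → Finset V := fun w => Finset.univ.filter fun u => 0 < ψ u ∧ Reaches B w u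
  obtain ⟨w, hw, hmin⟩ := Finset.exists_min_image (T v) (fun w => (T w).card)
    ⟨v, by simpa [T] using ⟨hv, reaches_refl B v⟩⟩
  simp only [T, Finset.mem_filter, Finset.mem_univ, true_and] at hw
  refine ⟨w, hw.2, hw.1, fun u hu hwu => ?_⟩
  have hsub : T u ⊆ T w := by
    intro x hx
    simp only [T, Finset.mem_filter, Finset.mem_univ, true_and] at hx ⊢
    exact ⟨hx.1, reaches_trans B hB hwu hx.2⟩
  have heq := Finset.eq_of_subset_of_card_le hsub
    (hmin u (by simpa [T] using ⟨hu, reaches_trans B hB hw.2 hwu⟩))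
  have : w ∈ T u := by rw [heq]; simpa [T] using ⟨hw.1, reaches_refl B w⟩
  simp only [T, Finset.mem_filter, Finset.mem_univ, true_and] at this
  exact this.2

lemma cls_final (hB : ∀ v w, 0 ≤ B v w) {ψ : V → ℝ} {w : V} (hw : Fin' B ψ w) {v u : V} (hv : v ∈ cls B w)
    (hvu : Reaches B v u) (hu : 0 < ψ u) : u ∈ cls B w := by
  have h := reaches_trans B hB hv.1 hvu
  exact ⟨h, hw.2 u hu h⟩

lemma final_harmonic (hB : ∀ v w, 0 ≤ B v w) {ψ : V → ℝ} (h0 : ∀ v, 0 ≤ ψ v) (hh : IsHarmonic B ψ) {w : V} (hw : Fin' B ψ w) :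
    IsHarmonicComponent B (cls B w) := by
  have hcl : IsClass B (cls B w) := ⟨w, rfl⟩
  have hwc : w ∈ cls B w := ⟨reaches_refl B w, reaches_refl B w⟩
  have hpos : ∀ v ∈ cls B w, 0 < ψ v := fun v hv => supp_closed B hB h0 hh hv.2 hw.1
  refine ⟨⟨hcl, ?_⟩, ?_, ?_⟩
  · obtain ⟨u, hu1, hu2⟩ := exists_succ B hB h0 hh hw.1
    exact ⟨w, hwc, u, cls_final B hB hw hwc (reaches_edge B hB hu1) hu2, hu1.ne'⟩
  · refine on_eq_one B hB _ ⟨w, hwc⟩ (Set.indicator (cls B w) ψ)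
      (fun v hv => Set.indicator_of_notMem hv _) (fun v hv => ?_) (fun v hv => ?_)
    · rw [Set.indicator_of_mem hv]; exact hpos v hv
    · rw [Set.indicator_of_mem hv, ← hh v]
      refine Finset.sum_congr rfl fun u _ => ?_
      by_cases hu : u ∈ cls B w
      · rw [Set.indicator_of_mem hu]
      · rw [Set.indicator_of_notMem hu, mul_zero]
        by_contra hc
        have h1 : B v u ≠ 0 := fun h => hc (by rw [h, zero_mul])
        have h2 : ψ u ≠ 0 := fun h => hc (by rw [h, mul_zero])
        exact hu (cls_final B hB hw hv (reaches_edge B hB (lt_of_le_of_ne (hB v u) h1.symm))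
          (lt_of_le_of_ne (h0 u) h2.symm))
  · intro _
    by_contra hc
    push Not at hc
    obtain ⟨z, hz0, hzD, ⟨v, hv⟩, hz⟩ := on_perron B hB _ (zero_lt_one.trans_le hc)
    have hzpos : ∀ x, z x ≠ 0 → x ∈ closureSet B (cls B w) \ cls B w := fun x hx => by
      by_contra h; exact hx (hzD x h)
    obtain ⟨K, hK, hle, m, hm, hmK⟩ := max_exists h0 (f := z) (fun x hx => by
      by_contra hcx
      obtain ⟨⟨u, hu, hxu⟩, -⟩ := hzpos x hcx
      exact absurd hx (supp_closed B hB h0 hh hxu (hpos u hu)).ne') hv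
    obtain ⟨⟨u, hu, hmu⟩, -⟩ := hzpos m (by rw [hmK]; exact (mul_pos hK hm).ne')
    have := max_principle B hB hh (f := z) (fun x => ?_) hle hmu hmK
    · rw [hzD u (fun h => h.2 hu)] at this
      exact absurd this (mul_pos hK (hpos u hu)).ne
    · by_cases hx : x ∈ closureSet B (cls B w) \ cls B w
      · rw [hz x hx]
        exact le_mul_of_one_le_left (hz0 x) hc
      · rw [hzD x hx]
        exact Finset.sum_nonneg fun y _ => mul_nonneg (hB x y) (hz0 y)

lemma exists_coeff (hB : ∀ v w, 0 ≤ B v w) {ψ : V → ℝ} (h0 : ∀ v, 0 ≤ ψ v) (hh : IsHarmonic B ψ) {C : Set V}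
    (hC : IsHarmonicComponent B C) (hpos : ∀ v ∈ C, 0 < ψ v) :
    ∃ t, 0 < t ∧ ∀ v ∈ C, ψ v = t * phiComp B C v := by
  have hφ := phi_spec B hB hC
  obtain ⟨v, hv⟩ := class_nonempty B hC.1.1
  obtain ⟨K, hK, hle, m, hm, hmK⟩ := max_exists h0 (f := phiComp B C) (fun x hx => by
    by_contra hcx
    obtain ⟨u, hu, hxu⟩ := (hφ.2.2.2.2 x).1 hcx
    exact absurd hx (supp_closed B hB h0 hh hxu (hpos u hu)).ne') (phi_pos B hB hC (subset_closure B hv))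
  obtain ⟨u, hu, hmu⟩ := (hφ.2.2.2.2 m).1 (by rw [hmK]; exact (mul_pos hK hm).ne')
  refine ⟨K⁻¹, inv_pos.2 hK, fun x hx => ?_⟩
  rw [max_principle B hB hh (fun y => (hφ.2.2.1 y).ge) hle
    (reaches_trans B hB hmu (class_reach B hB hC.1.1 hu hx)) hmK, inv_mul_cancel_left₀ hK.ne']

lemma exists_rep (hB : ∀ v w, 0 ≤ B v w) {ψ : V → ℝ} (h0 : ∀ v, 0 ≤ ψ v) (hh : IsHarmonic B ψ) :
    ∃ (P : Finset (Set V)) (t : Set V → ℝ), (∀ C ∈ P, IsHarmonicComponent B C) ∧ (∀ C ∈ P, 0 < t C) ∧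
      (∀ C, C ∉ P → t C = 0) ∧ ∀ v, ψ v = ∑ C ∈ P, t C * phiComp B C v := by
  classical
  let P : Finset (Set V) := (Finset.univ.filter fun w => Fin' B ψ w).image (cls B)
  have hPm : ∀ C, C ∈ P ↔ ∃ w, Fin' B ψ w ∧ cls B w = C := by
    intro C; simp [P]
  have hH : ∀ C ∈ P, IsHarmonicComponent B C := by
    intro C hC
    obtain ⟨w, hw, rfl⟩ := (hPm C).1 hC
    exact final_harmonic B hB h0 hh hw
  have hpos : ∀ C ∈ P, ∀ v ∈ C, 0 < ψ v := by
    intro C hC v hv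
    obtain ⟨w, hw, rfl⟩ := (hPm C).1 hC
    exact supp_closed B hB h0 hh hv.2 hw.1
  have hex : ∀ C, ∃ t : ℝ, (C ∈ P → 0 < t ∧ ∀ v ∈ C, ψ v = t * phiComp B C v) ∧ (C ∉ P → t = 0) := by
    intro C
    by_cases hC : C ∈ P
    · obtain ⟨t, ht⟩ := exists_coeff B hB h0 hh (hH C hC) (hpos C hC)
      exact ⟨t, fun _ => ht, fun h => absurd hC h⟩
    · exact ⟨0, fun h => absurd h hC, fun _ => rfl⟩
  choose t ht ht' using hex
  refine ⟨P, t, hH, fun C hC => (ht C hC).1, ht', ?_⟩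
  set χ : V → ℝ := fun v => ∑ C ∈ P, t C * phiComp B C v with hχ
  have hχh : IsHarmonic B χ := by
    intro v
    simp only [hχ, Finset.mul_sum]
    rw [Finset.sum_comm]
    refine Finset.sum_congr rfl fun C hC => ?_
    rw [← (phi_spec B hB (hH C hC)).2.2.1 v, Finset.mul_sum]
    exact Finset.sum_congr rfl fun w _ => by ring
  have hχF : ∀ C ∈ P, ∀ v ∈ C, ψ v = χ v := by
    intro C hC v hv
    rw [(ht C hC).2 v hv]
    exact (rep_on B hB (ψ := χ) hH (fun _ => rfl) hC hv).symm
  intro v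
  change ψ v = χ v
  by_contra hne
  set f : V → ℝ := fun v => |ψ v - χ v| with hf
  obtain ⟨K, hK, hle, m, hm, hmK⟩ := max_exists h0 (f := f) (fun x hx => by
    simp only [hf, hχ]
    rw [hx, Finset.sum_eq_zero, sub_zero, abs_zero]
    intro C hC
    rw [phi_zero B hB (hH C hC), mul_zero]
    rintro ⟨u, hu, hxu⟩
    exact absurd hx (supp_closed B hB h0 hh hxu (hpos C hC u hu)).ne')
    (v := v) (abs_pos.2 (sub_ne_zero.2 hne))
  obtain ⟨w, hmw, hw⟩ := exists_final B hB ψ hm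
  have h1 := max_principle B hB hh (f := f) (fun x => ?_) hle hmw hmK
  · have h2 : ψ w = χ w := hχF (cls B w) ((hPm _).2 ⟨w, hw, rfl⟩) w ⟨reaches_refl B w, reaches_refl B w⟩
    simp only [hf] at h1
    rw [h2, sub_self, abs_zero, ← h2] at h1
    exact absurd h1 (mul_pos hK hw.1).ne
  · simp only [hf]
    rw [← hh x, ← hχh x, ← Finset.sum_sub_distrib]
    refine (Finset.abs_sum_le_sum_abs _ _).trans (le_of_eq ?_)
    refine Finset.sum_congr rfl fun y _ => ?_
    rw [← mul_sub, abs_mul, abs_of_nonneg (hB x y)]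

lemma rep_sum (hB : ∀ v w, 0 ≤ B v w) {ψ : V → ℝ} {P : Finset (Set V)} {t : Set V → ℝ}
    (hP : ∀ C ∈ P, IsHarmonicComponent B C) (hrep : ∀ v, ψ v = ∑ C ∈ P, t C * phiComp B C v) :
    ∑ v, ψ v = ∑ C ∈ P, t C := by
  simp only [hrep]
  rw [Finset.sum_comm]
  refine Finset.sum_congr rfl fun C hC => ?_
  rw [← Finset.mul_sum, (phi_spec B hB (hP C hC)).2.1, mul_one]

end Graph

end HD

/-- Frobenius-Victory: every normalized `B`-harmonic vector `ψ ∈ [0,1]^V` is uniquely a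
combination `ψ = Σ_{C ∈ 𝒞} t_C φ^C` over a collection `𝒞` of `B`-harmonic components,
with `t_C ∈ (0,1]`. -/
theorem harmonic_decomposition {V : Type*} [Fintype V] [Nonempty V] [DecidableEq V]
    (B : Matrix V V ℝ) (hB : ∀ v w, 0 ≤ B v w)
    (ψ : V → ℝ) (hψ : ∀ v, 0 ≤ ψ v ∧ ψ v ≤ 1) (hnorm : ∑ v, ψ v = 1)
    (hharm : IsHarmonic B ψ) :
    ∃! p : Finset (Set V) × (Set V → ℝ),
      (∀ C ∈ p.1, IsHarmonicComponent B C) ∧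
      (∀ C ∈ p.1, 0 < p.2 C ∧ p.2 C ≤ 1) ∧
      (∀ C, C ∉ p.1 → p.2 C = 0) ∧
      (∀ v, ψ v = ∑ C ∈ p.1, p.2 C * phiComp B C v) := by
  obtain ⟨P, t, hP, ht, ht0, hrep⟩ := HD.exists_rep B hB (fun v => (hψ v).1) hharm
  refine ⟨(P, t), ⟨hP, fun C hC => ⟨ht C hC, ?_⟩, ht0, hrep⟩, ?_⟩
  · rw [← hnorm, HD.rep_sum B hB hP hrep]
    exact Finset.single_le_sum (f := t) (fun C hC => (ht C hC).le) hC
  · rintro ⟨Q, s⟩ ⟨hQ, hs, hs0, hrep'⟩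
    dsimp only at hQ hs hs0 hrep'
    have hPQ : Q = P := Finset.Subset.antisymm
      (HD.rep_sub B hB hQ (fun C hC => (hs C hC).1) hrep' hP ht hrep)
      (HD.rep_sub B hB hP ht hrep hQ (fun C hC => (hs C hC).1) hrep')
    subst hPQ
    congr 1
    ext C
    by_cases hC : C ∈ Q
    · obtain ⟨v, hv⟩ := HD.class_nonempty B (hQ C hC).1.1
      have h1 := HD.rep_on B hB hQ hrep' hC hv
      rw [HD.rep_on B hB hP hrep hC hv] at h1
      exact (mul_right_cancel₀ (HD.phi_pos B hB (hP C hC) (HD.subset_closure B hv)).ne' h1).symm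
    · rw [hs0 C hC, ht0 C hC]
end

section
/- The set of normalized B-harmonic vectors is a convex subset of [0,∞)^V whose set of extreme points is exactly {φ^C : C a B-harmonic component of B}. -/
open Filter Finset

variable {V : Type*} [Fintype V]

section Generic

set_option linter.unusedSectionVars false

variable {n : Type*} [Fintype n] [DecidableEq n]

lemma hs_pow_nonneg (M : Matrix n n ℝ) (hM : ∀ i j, 0 ≤ M i j) (k : ℕ) :
    ∀ i j, 0 ≤ (M ^ k) i j := by
  induction k with
  | zero =>
    intro i j
    rw [pow_zero, Matrix.one_apply]
    split_ifs <;> norm_num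
  | succ k ih =>
    intro i j
    rw [pow_succ, Matrix.mul_apply]
    exact Finset.sum_nonneg fun l _ => mul_nonneg (ih i l) (hM l j)

lemma hs_l1_mul (A M : Matrix n n ℝ) :
    ∑ i, ∑ j, |(A * M) i j| ≤ (∑ i, ∑ j, |A i j|) * (∑ i, ∑ j, |M i j|) := by
  have h1 : ∀ i j, |(A * M) i j| ≤ ∑ l, |A i l| * |M l j| := by
    intro i j
    rw [Matrix.mul_apply]
    refine (Finset.abs_sum_le_sum_abs _ _).trans (le_of_eq ?_)
    simp [abs_mul]
  calc ∑ i, ∑ j, |(A * M) i j| ≤ ∑ i, ∑ j, ∑ l, |A i l| * |M l j| :=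
        Finset.sum_le_sum fun i _ => Finset.sum_le_sum fun j _ => h1 i j
    _ = ∑ i, ∑ l, |A i l| * ∑ j, |M l j| := by
        refine Finset.sum_congr rfl fun i _ => ?_
        rw [Finset.sum_comm]
        simp [Finset.mul_sum]
    _ ≤ ∑ i, ∑ l, |A i l| * (∑ i, ∑ j, |M i j|) := by
        refine Finset.sum_le_sum fun i _ => Finset.sum_le_sum fun l _ => ?_
        refine mul_le_mul_of_nonneg_left ?_ (abs_nonneg _)
        exact Finset.single_le_sum (f := fun l => ∑ j, |M l j|)
          (fun i _ => Finset.sum_nonneg fun j _ => abs_nonneg _) (Finset.mem_univ l)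
    _ = _ := by simp [Finset.sum_mul]

lemma hs_l1_nonneg (A : Matrix n n ℝ) : 0 ≤ ∑ i, ∑ j, |A i j| :=
  Finset.sum_nonneg fun _ _ => Finset.sum_nonneg fun _ _ => abs_nonneg _

lemma hs_l1_pow (M : Matrix n n ℝ) (k : ℕ) :
    ∑ i, ∑ j, |(M ^ (k+1)) i j| ≤ (∑ i, ∑ j, |M i j|) ^ (k+1) := by
  induction k with
  | zero => simp
  | succ k ih =>
    rw [pow_succ, pow_succ _ (k+1)]
    exact (hs_l1_mul _ _).trans (mul_le_mul_of_nonneg_right ih (hs_l1_nonneg M))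

lemma hs_bdd (M : Matrix n n ℝ) :
    Filter.IsBoundedUnder (· ≤ ·) Filter.atTop
      (fun k : ℕ => (∑ i, ∑ j, |(M ^ k) i j|) ^ ((1 : ℝ) / (k : ℝ))) := by
  refine Filter.isBoundedUnder_of_eventually_le (a := ∑ i, ∑ j, |M i j|) ?_
  filter_upwards [Filter.eventually_ge_atTop 1] with k hk
  obtain ⟨m, rfl⟩ : ∃ m, k = m + 1 := ⟨k - 1, by omega⟩
  calc (∑ i, ∑ j, |(M ^ (m+1)) i j|) ^ ((1 : ℝ) / ((m+1 : ℕ) : ℝ))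
      ≤ ((∑ i, ∑ j, |M i j|) ^ (m+1)) ^ ((1 : ℝ) / ((m+1 : ℕ) : ℝ)) :=
        Real.rpow_le_rpow (hs_l1_nonneg _) (hs_l1_pow M m) (by positivity)
    _ = _ := by
        rw [one_div]
        exact Real.pow_rpow_inv_natCast (hs_l1_nonneg M) (by omega)

lemma hs_cobdd (M : Matrix n n ℝ) :
    Filter.IsCoboundedUnder (· ≤ ·) Filter.atTop
      (fun k : ℕ => (∑ i, ∑ j, |(M ^ k) i j|) ^ ((1 : ℝ) / (k : ℝ))) := by
  refine Filter.IsBoundedUnder.isCoboundedUnder_le ?_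
  exact Filter.isBoundedUnder_of_eventually_ge (a := 0)
    (Filter.Eventually.of_forall fun k => Real.rpow_nonneg (hs_l1_nonneg _) _)

lemma hs_G1 (M : Matrix n n ℝ) {r : ℝ} (hr : 0 < r) (h : specRad M < r) :
    ∃ K : ℝ, ∀ k, ∑ i, ∑ j, |(M ^ k) i j| ≤ K * r ^ k := by
  have h1 := Filter.eventually_lt_of_limsup_lt h (hs_bdd M)
  obtain ⟨N, hN⟩ := Filter.eventually_atTop.1 h1
  have hpos : ∀ k, 0 ≤ (∑ i, ∑ j, |(M ^ k) i j|) / r ^ k := fun k =>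
    div_nonneg (hs_l1_nonneg _) (by positivity)
  refine ⟨1 + ∑ k ∈ Finset.range (N+1), (∑ i, ∑ j, |(M ^ k) i j|) / r ^ k, fun k => ?_⟩
  rw [← div_le_iff₀ (by positivity)]
  by_cases hk : k < N + 1
  · have := Finset.single_le_sum (f := fun k => (∑ i, ∑ j, |(M ^ k) i j|) / r ^ k)
      (fun k _ => hpos k) (Finset.mem_range.2 hk)
    linarith
  · have h2 := (hN k (by omega)).le
    have h3 : ∑ i, ∑ j, |(M ^ k) i j| ≤ r ^ k := by
      have h4 := pow_le_pow_left₀ (Real.rpow_nonneg (hs_l1_nonneg _) _) h2 k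
      rwa [one_div, Real.rpow_inv_natCast_pow (hs_l1_nonneg _) (by omega)] at h4
    have h5 : (∑ i, ∑ j, |(M ^ k) i j|) / r ^ k ≤ 1 := by
      rw [div_le_one (by positivity)]; exact h3
    have := Finset.sum_nonneg (s := Finset.range (N+1)) (fun k _ => hpos k)
    linarith

lemma hs_G2 (M : Matrix n n ℝ) {r K : ℝ} (hr : 0 < r)
    (h : ∀ k, ∑ i, ∑ j, |(M ^ k) i j| ≤ K * r ^ k) : specRad M ≤ r := by
  wlog hK : 0 < K generalizing K
  · refine this (K := 1) (fun k => (h k).trans ?_) one_pos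
    exact mul_le_mul_of_nonneg_right (by linarith) (by positivity)
  have hlim : Filter.Tendsto (fun k : ℕ => K ^ ((1:ℝ) / (k:ℝ)) * r) Filter.atTop (nhds r) := by
    have h1 : Filter.Tendsto (fun k : ℕ => (1:ℝ) / (k:ℝ)) Filter.atTop (nhds 0) :=
      tendsto_one_div_atTop_nhds_zero_nat
    have h2 := (tendsto_const_nhds (x := K)).rpow h1 (Or.inl hK.ne')
    simpa using h2.mul_const r
  rw [← hlim.limsup_eq]
  refine Filter.limsup_le_limsup ?_ (hs_cobdd M) hlim.isBoundedUnder_le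
  filter_upwards [Filter.eventually_ge_atTop 1] with k hk
  calc (∑ i, ∑ j, |(M ^ k) i j|) ^ ((1 : ℝ) / (k : ℝ))
      ≤ (K * r ^ k) ^ ((1 : ℝ) / (k : ℝ)) :=
        Real.rpow_le_rpow (hs_l1_nonneg _) (h k) (by positivity)
    _ = _ := by
        rw [Real.mul_rpow hK.le (by positivity)]
        congr 1
        rw [one_div]
        exact Real.pow_rpow_inv_natCast hr.le (by omega)

lemma hs_G3 (M : Matrix n n ℝ) (hM : ∀ i j, 0 ≤ M i j) {c : ℝ} (hc : 0 < c) (x : n → ℝ)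
    (hx : ∀ i, 0 < x i) (h : ∀ i, ∑ j, M i j * x j ≤ c * x i) : specRad M ≤ c := by
  have h1 : ∀ k i, ∑ j, (M ^ k) i j * x j ≤ c ^ k * x i := by
    intro k
    induction k with
    | zero => intro i; simp [Matrix.one_apply]
    | succ k ih =>
      intro i
      calc ∑ j, (M ^ (k+1)) i j * x j = ∑ l, (M ^ k) i l * ∑ j, M l j * x j := by
            simp only [pow_succ, Matrix.mul_apply, Finset.sum_mul, Finset.mul_sum]
            rw [Finset.sum_comm]
            simp [mul_assoc]
        _ ≤ ∑ l, (M ^ k) i l * (c * x l) := Finset.sum_le_sum fun l _ =>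
            mul_le_mul_of_nonneg_left (h l) (hs_pow_nonneg M hM k i l)
        _ = c * ∑ l, (M ^ k) i l * x l := by
            rw [Finset.mul_sum]; exact Finset.sum_congr rfl fun _ _ => by ring
        _ ≤ c * (c ^ k * x i) := mul_le_mul_of_nonneg_left (ih i) hc.le
        _ = _ := by ring
  refine hs_G2 M (K := ∑ i, ∑ j, x i / x j) hc fun k => ?_
  rw [Finset.sum_mul]
  refine Finset.sum_le_sum fun i _ => ?_
  rw [Finset.sum_mul]
  refine Finset.sum_le_sum fun j _ => ?_
  rw [abs_of_nonneg (hs_pow_nonneg M hM k i j), div_mul_eq_mul_div, le_div_iff₀ (hx j)]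
  refine le_trans ?_ ((h1 k i).trans (le_of_eq (mul_comm _ _)))
  exact Finset.single_le_sum (f := fun j => (M ^ k) i j * x j)
    (fun j _ => mul_nonneg (hs_pow_nonneg M hM k i j) (hx j).le) (Finset.mem_univ j)

lemma hs_entry (A : Matrix n n ℝ) (i j : n) : |A i j| ≤ ∑ i, ∑ j, |A i j| :=
  (Finset.single_le_sum (f := fun j => |A i j|) (fun _ _ => abs_nonneg _)
    (Finset.mem_univ j)).trans
  (Finset.single_le_sum (f := fun i => ∑ j, |A i j|)
    (fun _ _ => Finset.sum_nonneg fun _ _ => abs_nonneg _) (Finset.mem_univ i))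

/-- Resolvent: `u = b + t M u`. -/
lemma hs_resolvent (M : Matrix n n ℝ) (hM : ∀ i j, 0 ≤ M i j) {t : ℝ} (ht : 0 < t)
    (h : specRad M < 1 / t) (b : n → ℝ) (hb : ∀ i, 0 ≤ b i) :
    ∃ u : n → ℝ, (∀ i, 0 ≤ u i) ∧ ∀ i, u i = b i + t * ∑ j, M i j * u j := by
  obtain ⟨r, hr1, hr2⟩ := exists_between (max_lt h (one_div_pos.2 ht))
  have hr0 : 0 < r := (le_max_right _ _).trans_lt hr1
  obtain ⟨K, hK⟩ := hs_G1 M hr0 ((le_max_left _ _).trans_lt hr1)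
  have htr : t * r < 1 := by rwa [lt_div_iff₀ ht, mul_comm] at hr2
  have hsum : ∀ i j, Summable fun k : ℕ => t ^ k * (M ^ k) i j := by
    intro i j
    refine Summable.of_norm_bounded (g := fun k : ℕ => K * (t * r) ^ k)
      ((summable_geometric_of_lt_one (by positivity) htr).mul_left K) fun k => ?_
    rw [Real.norm_eq_abs, abs_mul, abs_of_pos (pow_pos ht k)]
    calc t ^ k * |(M ^ k) i j| ≤ t ^ k * (K * r ^ k) :=
          mul_le_mul_of_nonneg_left ((hs_entry _ i j).trans (hK k)) (by positivity)
      _ = _ := by rw [mul_pow]; ring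
  have hsumb : ∀ i, Summable fun k : ℕ => t ^ k * ∑ j, (M ^ k) i j * b j := by
    intro i
    have := summable_sum (s := Finset.univ) fun j _ => (hsum i j).mul_right (b j)
    refine this.congr fun k => ?_
    rw [Finset.mul_sum]
    exact Finset.sum_congr rfl fun _ _ => by ring
  refine ⟨fun i => ∑' k : ℕ, t ^ k * ∑ j, (M ^ k) i j * b j, fun i => ?_, fun i => ?_⟩
  · exact tsum_nonneg fun k => mul_nonneg (by positivity)
      (Finset.sum_nonneg fun j _ => mul_nonneg (hs_pow_nonneg M hM k i j) (hb j))
  · simp only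
    rw [(hsumb i).tsum_eq_zero_add]
    congr 1
    · simp [Matrix.one_apply]
    · have h1 : ∀ j, M i j * ∑' k : ℕ, t ^ k * ∑ l, (M ^ k) j l * b l
          = ∑' k : ℕ, M i j * (t ^ k * ∑ l, (M ^ k) j l * b l) := fun j => by
        rw [tsum_mul_left]
      simp only [h1]
      rw [← Summable.tsum_finsetSum (fun j _ => (hsumb j).mul_left _), ← tsum_mul_left]
      refine tsum_congr fun k => ?_
      rw [pow_succ', pow_succ', mul_assoc]
      congr 1
      simp only [Matrix.mul_apply, Finset.sum_mul, Finset.mul_sum]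
      rw [Finset.sum_comm]
      exact Finset.sum_congr rfl fun _ _ => Finset.sum_congr rfl fun _ _ => by ring

lemma hs_L1 (M : Matrix n n ℝ) (h : specRad M < 1) (η : n → ℝ)
    (hη : ∀ i, ∑ j, M i j * η j = η i) : ∀ i, η i = 0 := by
  obtain ⟨r, hr1, hr2⟩ := exists_between (max_lt h (one_pos))
  have hr0 : 0 < r := (le_max_right _ _).trans_lt hr1
  obtain ⟨K, hK⟩ := hs_G1 M hr0 ((le_max_left _ _).trans_lt hr1)
  have h1 : ∀ k i, ∑ j, (M ^ k) i j * η j = η i := by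
    intro k
    induction k with
    | zero => intro i; simp [Matrix.one_apply]
    | succ k ih =>
      intro i
      calc ∑ j, (M ^ (k+1)) i j * η j = ∑ l, (M ^ k) i l * ∑ j, M l j * η j := by
            simp only [pow_succ, Matrix.mul_apply, Finset.sum_mul, Finset.mul_sum]
            rw [Finset.sum_comm]
            simp [mul_assoc]
        _ = _ := by simp only [hη, ih]
  intro i
  have hlim : Filter.Tendsto (fun k : ℕ => ∑ j, K * r ^ k * |η j|) Filter.atTop (nhds 0) := by
    have h2 := tendsto_pow_atTop_nhds_zero_of_lt_one hr0.le hr2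
    have := tendsto_finsetSum (Finset.univ : Finset n)
      fun j _ => ((h2.const_mul K).mul_const |η j|)
    simpa using this
  have h3 : |η i| ≤ 0 := by
    refine ge_of_tendsto' hlim fun k => ?_
    rw [← h1 k i]
    refine (Finset.abs_sum_le_sum_abs _ _).trans (Finset.sum_le_sum fun j _ => ?_)
    rw [abs_mul]
    exact mul_le_mul_of_nonneg_right ((hs_entry _ i j).trans (hK k)) (abs_nonneg _)
  exact abs_nonpos_iff.1 h3

lemma hs_L2 (M : Matrix n n ℝ) (hM : ∀ i j, 0 ≤ M i j) (h : specRad M = 1) :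
    ∃ u : n → ℝ, (∀ i, 0 ≤ u i) ∧ (∃ i, u i ≠ 0) ∧ ∀ i, ∑ j, M i j * u j = u i := by
  have hne : Nonempty n := by
    by_contra hn
    rw [not_nonempty_iff] at hn
    have := hs_G2 M (r := 1/2) (K := 0) (by norm_num) (fun k => by simp)
    rw [h] at this
    norm_num at this
  let t : ℕ → ℝ := fun m => 1 - 1 / ((m:ℝ) + 2)
  have ht0 : ∀ m, 0 < t m := fun m => by
    simp only [t]
    rw [sub_pos, div_lt_one (by positivity)]
    linarith [(Nat.cast_nonneg m : (0:ℝ) ≤ m)]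
  have ht1 : ∀ m, t m < 1 := fun m => by
    simp only [t]
    have : 0 < 1 / ((m:ℝ)+2) := by positivity
    linarith
  have htl : Filter.Tendsto t Filter.atTop (nhds 1) := by
    have h1 : Filter.Tendsto (fun m : ℕ => 1 / ((m:ℝ) + 2)) Filter.atTop (nhds 0) := by
      refine Filter.Tendsto.div_atTop tendsto_const_nhds ?_
      exact Filter.tendsto_atTop_add_const_right _ _ tendsto_natCast_atTop_atTop
    simpa [t] using h1.const_sub 1
  have hex : ∀ m, ∃ u : n → ℝ, (∀ i, 0 ≤ u i) ∧ ∀ i, u i = 1 + t m * ∑ j, M i j * u j := fun m =>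
    hs_resolvent M hM (ht0 m) (by rw [h, lt_div_iff₀ (ht0 m), one_mul]; exact ht1 m)
      (fun _ => 1) (fun _ => zero_le_one)
  choose u hu0 hu using hex
  have hu1 : ∀ m i, 1 ≤ u m i := fun m i => by
    rw [hu m i]
    have := mul_nonneg (ht0 m).le
      (Finset.sum_nonneg fun j (_ : j ∈ Finset.univ) => mul_nonneg (hM i j) (hu0 m j))
    linarith
  let s : ℕ → ℝ := fun m => ∑ i, u m i
  have hus : ∀ m i, u m i ≤ s m := fun m i =>
    Finset.single_le_sum (f := fun i => u m i) (fun i _ => hu0 m i) (Finset.mem_univ i)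
  have hs1 : ∀ m, 1 ≤ s m := fun m => (hu1 m (Classical.arbitrary n)).trans (hus m _)
  have hs0 : ∀ m, 0 < s m := fun m => one_pos.trans_le (hs1 m)
  let z : ℕ → (n → ℝ) × ℝ := fun m => (fun i => u m i / s m, 1 / s m)
  have hz : ∀ m, z m ∈ (Set.Icc (0 : n → ℝ) 1) ×ˢ (Set.Icc (0:ℝ) 1) := by
    intro m
    refine ⟨⟨fun i => div_nonneg (hu0 m i) (hs0 m).le, fun i => ?_⟩,
      div_nonneg zero_le_one (hs0 m).le, ?_⟩
    · exact (div_le_one (hs0 m)).2 (hus m i)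
    · exact (div_le_one (hs0 m)).2 (hs1 m)
  obtain ⟨⟨x, y⟩, hxy, φ, hφ, hlim⟩ := (isCompact_Icc.prod isCompact_Icc).tendsto_subseq hz
  have hlx : ∀ i, Filter.Tendsto (fun m => u (φ m) i / s (φ m)) Filter.atTop (nhds (x i)) := by
    intro i
    exact ((continuous_apply i).tendsto x).comp ((continuous_fst.tendsto (x, y)).comp hlim)
  have hly : Filter.Tendsto (fun m => 1 / s (φ m)) Filter.atTop (nhds y) :=
    (continuous_snd.tendsto (x, y)).comp hlim
  have hx0 : ∀ i, 0 ≤ x i := fun i => hxy.1.1 i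
  have hy0 : 0 ≤ y := hxy.2.1
  have hsum : ∑ i, x i = 1 := by
    have h1 := tendsto_finsetSum (Finset.univ : Finset n) fun i _ => hlx i
    refine tendsto_nhds_unique h1 ?_
    refine tendsto_const_nhds.congr fun m => ?_
    rw [← Finset.sum_div, div_self (hs0 _).ne']
  have heq : ∀ i, x i = y + ∑ j, M i j * x j := by
    intro i
    have h1 := tendsto_finsetSum (Finset.univ : Finset n) fun j _ => (hlx j).const_mul (M i j)
    have h2 := hly.add ((htl.comp hφ.tendsto_atTop).mul h1)
    rw [one_mul] at h2
    refine tendsto_nhds_unique (hlx i) (h2.congr fun m => ?_)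
    conv_rhs => rw [hu (φ m) i]
    rw [add_div, mul_div_assoc, Finset.sum_div]
    simp [mul_div_assoc]
  rcases hy0.eq_or_lt with hy | hy
  · refine ⟨x, hx0, ?_, fun i => ?_⟩
    · by_contra! hc
      simp [hc] at hsum
    · rw [heq i, ← hy, zero_add]
  · exfalso
    have hxy' : ∀ i, y ≤ x i := fun i => by
      rw [heq i]
      have := Finset.sum_nonneg fun j (_ : j ∈ Finset.univ) => mul_nonneg (hM i j) (hx0 j)
      linarith
    have hx1 : ∀ i, x i ≤ 1 := fun i => hxy.1.2 i
    have h3 := hs_G3 M hM (c := max (1 - y) (1/2)) (by positivity) x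
      (fun i => hy.trans_le (hxy' i)) (fun i => by
        have h4 := heq i
        have h5 : (1 - y) * x i ≤ max (1-y) (1/2) * x i :=
          mul_le_mul_of_nonneg_right (le_max_left _ _) (hx0 i)
        nlinarith [hx1 i])
    rw [h] at h3
    have : max (1 - y) (1/2) < 1 := max_lt (by linarith) (by norm_num)
    linarith

end Generic

section Main

set_option linter.unusedSectionVars false
set_option linter.style.haveILetI false

variable {V : Type*} [Fintype V]

lemma hs_sum_sub (S : Set V) [Fintype S] (f : V → ℝ) (hf : ∀ v, v ∉ S → f v = 0) :
    ∑ i : S, f i = ∑ v, f v := by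
  classical
  rw [Finset.sum_set_coe]
  refine Finset.sum_subset (Finset.subset_univ _) fun v _ hv => hf v ?_
  simpa using hv

lemma hs_On_L1 (B : Matrix V V ℝ) (S : Set V) (h : specRadOn B S < 1) (η : V → ℝ)
    (hη0 : ∀ v, v ∉ S → η v = 0) (hη : ∀ v ∈ S, ∑ w, B v w * η w = η v) : ∀ v, η v = 0 := by
  letI : Fintype S := (Set.toFinite S).fintype
  letI : DecidableEq S := Classical.decEq _
  have h1 := hs_L1 (fun i j : S => B i.1 j.1) h (fun i => η i.1) (fun i => by
    rw [← hη i.1 i.2]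
    exact hs_sum_sub S (fun w => B i.1 w * η w) fun v hv => by simp [hη0 v hv])
  intro v
  by_cases hv : v ∈ S
  · exact h1 ⟨v, hv⟩
  · exact hη0 v hv

open scoped Classical in
lemma hs_On_L2 (B : Matrix V V ℝ) (hB : ∀ v w, 0 ≤ B v w) (S : Set V) (h : specRadOn B S = 1) :
    ∃ u : V → ℝ, (∀ v, 0 ≤ u v) ∧ (∀ v, v ∉ S → u v = 0) ∧ (∃ v, u v ≠ 0) ∧
      ∀ v ∈ S, ∑ w, B v w * u w = u v := by
  letI : Fintype S := (Set.toFinite S).fintype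
  letI : DecidableEq S := Classical.decEq _
  obtain ⟨u, hu0, ⟨i, hi⟩, hu⟩ := hs_L2 (fun i j : S => B i.1 j.1) (fun _ _ => hB _ _) h
  let f : V → ℝ := fun v => if hv : v ∈ S then u ⟨v, hv⟩ else 0
  have hf : ∀ i : S, f i.1 = u i := fun i => by simp [f]
  have hf0 : ∀ v, v ∉ S → f v = 0 := fun v hv => by simp [f, hv]
  refine ⟨f, fun v => ?_, hf0, ⟨i.1, by rw [hf]; exact hi⟩, fun v hv => ?_⟩
  · by_cases hv : v ∈ S
    · exact (hu0 ⟨v, hv⟩).trans_eq (hf ⟨v, hv⟩).symm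
    · rw [hf0 v hv]
  · rw [hf ⟨v, hv⟩, ← hu ⟨v, hv⟩, ← hs_sum_sub S (fun w => B v w * f w)
      fun w hw => by simp [hf0 w hw]]
    exact Finset.sum_congr rfl fun j _ => by rw [hf j]

open scoped Classical in
lemma hs_On_L3 (B : Matrix V V ℝ) (hB : ∀ v w, 0 ≤ B v w) (S : Set V)
    (h : S.Nonempty → specRadOn B S < 1) (b : V → ℝ) (hb : ∀ v, 0 ≤ b v) :
    ∃ u : V → ℝ, (∀ v, 0 ≤ u v) ∧ (∀ v, v ∉ S → u v = 0) ∧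
      ∀ v ∈ S, u v = b v + ∑ w, B v w * u w := by
  rcases S.eq_empty_or_nonempty with hS | hS
  · exact ⟨0, fun _ => le_rfl, fun _ _ => rfl, fun v hv => by simp [hS] at hv⟩
  letI : Fintype S := (Set.toFinite S).fintype
  letI : DecidableEq S := Classical.decEq _
  obtain ⟨u, hu0, hu⟩ := hs_resolvent (fun i j : S => B i.1 j.1) (fun _ _ => hB _ _)
    one_pos (by rw [div_one]; exact h hS) (fun i => b i.1) (fun i => hb i.1)
  let f : V → ℝ := fun v => if hv : v ∈ S then u ⟨v, hv⟩ else 0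
  have hf : ∀ i : S, f i.1 = u i := fun i => by simp [f]
  have hf0 : ∀ v, v ∉ S → f v = 0 := fun v hv => by simp [f, hv]
  refine ⟨f, fun v => ?_, hf0, fun v hv => ?_⟩
  · by_cases hv : v ∈ S
    · exact (hu0 ⟨v, hv⟩).trans_eq (hf ⟨v, hv⟩).symm
    · rw [hf0 v hv]
  · rw [hf ⟨v, hv⟩, hu ⟨v, hv⟩, one_mul, ← hs_sum_sub S (fun w => B v w * f w)
      fun w hw => by simp [hf0 w hw]]
    congr 1
    exact Finset.sum_congr rfl fun j _ => by rw [hf j]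

lemma hs_On_G3 (B : Matrix V V ℝ) (hB : ∀ v w, 0 ≤ B v w) (S : Set V) (φ : V → ℝ)
    (hφ0 : ∀ v, 0 ≤ φ v) (hφS : ∀ v ∈ S, 0 < φ v) (hφ : ∀ v ∈ S, ∑ w, B v w * φ w ≤ φ v) :
    specRadOn B S ≤ 1 := by
  classical
  letI : Fintype S := (Set.toFinite S).fintype
  letI : DecidableEq S := Classical.decEq _
  refine hs_G3 (fun i j : S => B i.1 j.1) (fun _ _ => hB _ _) one_pos (fun i => φ i.1)
    (fun i => hφS i.1 i.2) (fun i => ?_)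
  rw [one_mul]
  refine le_trans ?_ (hφ i.1 i.2)
  rw [Finset.sum_set_coe (f := fun w => B i.1 w * φ w)]
  exact Finset.sum_le_sum_of_subset_of_nonneg (Finset.subset_univ _)
    fun w _ _ => mul_nonneg (hB _ _) (hφ0 w)

/-- One-step path relation closure. -/
def hsR (B : Matrix V V ℝ) : V → V → Prop := Relation.ReflTransGen fun v w => 0 < B v w

variable [DecidableEq V]

lemma hs_reach_iff (B : Matrix V V ℝ) (hB : ∀ v w, 0 ≤ B v w) (v w : V) :
    Reaches B v w ↔ hsR B v w := by
  constructor
  · rintro ⟨k, hk⟩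
    induction k generalizing v with
    | zero =>
      rw [pow_zero, Matrix.one_apply] at hk
      split_ifs at hk with h
      · subst h; exact Relation.ReflTransGen.refl
      · exact absurd hk (lt_irrefl _)
    | succ k ih =>
      rw [pow_succ', Matrix.mul_apply] at hk
      obtain ⟨l, -, hl⟩ := Finset.exists_lt_of_sum_lt (f := fun _ => (0:ℝ)) (s := Finset.univ)
        (by simpa using hk)
      have h1 : 0 < B v l := lt_of_le_of_ne (hB v l) fun h => by simp [← h] at hl
      have h2 : 0 < (B ^ k) l w := (pos_iff_pos_of_mul_pos hl).1 h1
      exact Relation.ReflTransGen.head h1 (ih l h2)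
  · intro h
    induction h using Relation.ReflTransGen.head_induction_on with
    | refl => exact ⟨0, by simp⟩
    | head h1 h2 ih =>
      rename_i a c
      obtain ⟨k, hk⟩ := ih
      refine ⟨k+1, ?_⟩
      rw [pow_succ', Matrix.mul_apply]
      refine (mul_pos h1 hk).trans_le ?_
      exact Finset.single_le_sum (f := fun l => B a l * (B ^ k) l w)
        (fun l _ => mul_nonneg (hB a l) (hs_pow_nonneg B hB k l w)) (Finset.mem_univ c)

lemma hs_prop (B : Matrix V V ℝ) (hB : ∀ v w, 0 ≤ B v w) (φ : V → ℝ) (hφ0 : ∀ v, 0 ≤ φ v)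
    (w : V) (hw : 0 < φ w) (T : Set V)
    (hT : ∀ a c, a ∈ T → 0 < B a c → hsR B c w → c ∈ T)
    (hφ : ∀ v ∈ T, ∑ w, B v w * φ w = φ v) : ∀ v, hsR B v w → v ∈ T → 0 < φ v := by
  intro v h
  induction h using Relation.ReflTransGen.head_induction_on with
  | refl => exact fun _ => hw
  | head h1 h2 ih =>
    rename_i a c
    intro ha
    rw [← hφ a ha]
    refine (mul_pos h1 (ih (hT a c ha h1 h2))).trans_le ?_
    exact Finset.single_le_sum (f := fun l => B a l * φ l)
        (fun l _ => mul_nonneg (hB a l) (hφ0 l)) (Finset.mem_univ c)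

/-- Structural facts about a component. -/
lemma hs_comp (B : Matrix V V ℝ) (hB : ∀ v w, 0 ≤ B v w) (C : Set V) (hC : IsComponent B C) :
    C.Nonempty ∧ (∀ v ∈ C, ∀ w ∈ C, hsR B v w) ∧
    (∀ v ∈ C, ∀ w ∈ closureSet B C, hsR B v w → w ∈ C) ∧ (C ⊆ closureSet B C) ∧
    (∀ v w, hsR B v w → w ∈ closureSet B C → v ∈ closureSet B C) := by
  obtain ⟨⟨v0, hv0⟩, -⟩ := hC
  have hm : ∀ w, w ∈ C ↔ hsR B v0 w ∧ hsR B w v0 := fun w => by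
    rw [hv0]; simp [hs_reach_iff B hB]
  have hcl : ∀ v, v ∈ closureSet B C ↔ ∃ w ∈ C, hsR B v w := fun v => by
    simp [closureSet, hs_reach_iff B hB]
  refine ⟨⟨v0, (hm v0).2 ⟨.refl, .refl⟩⟩, fun v hv w hw => ?_, fun v hv w hw hvw => ?_,
    fun v hv => (hcl v).2 ⟨v, hv, .refl⟩, fun v w hvw hw => ?_⟩
  · exact ((hm v).1 hv).2.trans ((hm w).1 hw).1
  · obtain ⟨x, hx, hwx⟩ := (hcl w).1 hw
    exact (hm w).2 ⟨((hm v).1 hv).1.trans hvw, hwx.trans ((hm x).1 hx).2⟩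
  · obtain ⟨x, hx, hwx⟩ := (hcl w).1 hw
    exact (hcl v).2 ⟨x, hx, hvw.trans hwx⟩

/-- Uniqueness. -/
lemma hs_unique (B : Matrix V V ℝ) (hB : ∀ v w, 0 ≤ B v w) (C : Set V)
    (hC : IsHarmonicComponent B C) (φ ψ : V → ℝ) (hφ : IsPhiC B C φ)
    (hψ0 : ∀ v, 0 ≤ ψ v) (hψ1 : ∑ v, ψ v = 1) (hψ : IsHarmonic B ψ)
    (hψs : ∀ v, v ∉ closureSet B C → ψ v = 0) : ψ = φ := by
  classical
  obtain ⟨hc1, -, hc3⟩ := hC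
  obtain ⟨hne, hconn, hexit, hsub, hup⟩ := hs_comp B hB C hc1
  obtain ⟨hφ0, hφ1, hφh, -, hφs⟩ := hφ
  have hφC : ∀ v ∈ C, 0 < φ v := fun v hv => lt_of_le_of_ne (hφ0 v) ((hφs v).2 (hsub hv)).symm
  have hφz : ∀ v, v ∉ closureSet B C → φ v = 0 := fun v hv => by
    by_contra h; exact hv ((hφs v).1 h)
  obtain ⟨v1, hv1, hmin⟩ := Set.exists_min_image C (fun v => ψ v / φ v) (Set.toFinite C) hne
  set t := ψ v1 / φ v1 with ht
  have hv1t : ψ v1 = t * φ v1 := by rw [ht, div_mul_cancel₀ _ (hφC v1 hv1).ne']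
  have hge : ∀ v ∈ C, t * φ v ≤ ψ v := fun v hv => (le_div_iff₀ (hφC v hv)).1 (hmin v hv)
  have hharm : ∀ v, ∑ w, B v w * (ψ w - t * φ w) = ψ v - t * φ v := fun v => by
    rw [← hψ v, ← hφh v, Finset.mul_sum, ← Finset.sum_sub_distrib]
    exact Finset.sum_congr rfl fun _ _ => by ring
  let χ : V → ℝ := fun v => if v ∈ C then ψ v - t * φ v else 0
  have hχC : ∀ v ∈ C, χ v = ψ v - t * φ v := fun v hv => by simp [χ, hv]
  have hχ0 : ∀ v, 0 ≤ χ v := fun v => by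
    by_cases hv : v ∈ C
    · rw [hχC v hv]; linarith [hge v hv]
    · simp [χ, hv]
  have hχh : ∀ v ∈ C, ∑ w, B v w * χ w = χ v := fun v hv => by
    rw [hχC v hv, ← hharm v]
    refine Finset.sum_congr rfl fun w _ => ?_
    by_cases hw : w ∈ C
    · rw [hχC w hw]
    · rcases (hB v w).eq_or_lt with h | h
      · simp [← h]
      · have hw' : w ∉ closureSet B C := fun h' => hw (hexit v hv w h' (.single h))
        simp [χ, hw, hψs w hw', hφz w hw']
  have heqC : ∀ v ∈ C, ψ v - t * φ v = 0 := fun v hv => by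
    by_contra h
    have h1 : 0 < χ v := lt_of_le_of_ne (hχ0 v) (by rw [hχC v hv]; exact Ne.symm h)
    have h2 := hs_prop B hB χ hχ0 v h1 C
      (fun a c ha hac hcv => hexit a ha c (hup c v hcv (hsub hv)) (.single hac)) hχh
      v1 (hconn v1 hv1 v hv) hv1
    rw [hχC v1 hv1, hv1t] at h2
    simp at h2
  have hall : ∀ v, ψ v - t * φ v = 0 := by
    rcases (closureSet B C \ C).eq_empty_or_nonempty with hS | hS
    · intro v
      by_cases hv : v ∈ C
      · exact heqC v hv
      · have hv' : v ∉ closureSet B C := fun h => by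
          have : v ∈ closureSet B C \ C := ⟨h, hv⟩
          simp [hS] at this
        simp [hψs v hv', hφz v hv']
    · refine hs_On_L1 B (closureSet B C \ C) (hc3 hS) (fun v => ψ v - t * φ v) (fun v hv => ?_)
        (fun v _ => hharm v)
      by_cases hvC : v ∈ C
      · exact heqC v hvC
      · have hv' : v ∉ closureSet B C := fun h => hv ⟨h, hvC⟩
        simp [hψs v hv', hφz v hv']
  have ht1 : t = 1 := by
    have h1 : ∑ v, (ψ v - t * φ v) = 0 := Finset.sum_eq_zero fun v _ => hall v
    rw [Finset.sum_sub_distrib, ← Finset.mul_sum, hψ1, hφ1] at h1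
    linarith
  funext v
  have := hall v
  rw [ht1] at this
  linarith

/-- Existence. -/
lemma hs_exists (B : Matrix V V ℝ) (hB : ∀ v w, 0 ≤ B v w) (C : Set V)
    (hC : IsHarmonicComponent B C) : ∃ φ, IsPhiC B C φ := by
  classical
  obtain ⟨hc1, hc2, hc3⟩ := hC
  obtain ⟨hne, hconn, hexit, hsub, hup⟩ := hs_comp B hB C hc1
  obtain ⟨u, hu0, huz, ⟨w0, hw0⟩, hu⟩ := hs_On_L2 B hB C hc2
  have hw0C : w0 ∈ C := by by_contra h; exact hw0 (huz w0 h)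
  have hupos : ∀ v ∈ C, 0 < u v := fun v hv =>
    hs_prop B hB u hu0 w0 (lt_of_le_of_ne (hu0 w0) hw0.symm) C
      (fun a c ha hac hcv => hexit a ha c (hup c w0 hcv (hsub hw0C)) (.single hac)) hu
      v (hconn v hv w0 hw0C) hv
  obtain ⟨x, hx0, hxz, hx⟩ := hs_On_L3 B hB (closureSet B C \ C) hc3
    (fun v => ∑ w, B v w * u w)
    (fun v => Finset.sum_nonneg fun w _ => mul_nonneg (hB v w) (hu0 w))
  let f : V → ℝ := fun v => u v + x v
  have hf0 : ∀ v, 0 ≤ f v := fun v => add_nonneg (hu0 v) (hx0 v)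
  have hfz : ∀ v, v ∉ closureSet B C → f v = 0 := fun v hv => by
    simp only [f]
    rw [huz v fun h => hv (hsub h), hxz v fun h => hv h.1, add_zero]
  have hfC : ∀ v ∈ C, f v = u v := fun v hv => by
    simp only [f]
    rw [hxz v fun h => h.2 hv, add_zero]
  have hsplit : ∀ v, ∑ w, B v w * f w = ∑ w, B v w * u w + ∑ w, B v w * x w := fun v => by
    rw [← Finset.sum_add_distrib]
    exact Finset.sum_congr rfl fun _ _ => by simp only [f]; ring
  have hterm : ∀ v ∈ C, ∀ w, w ∉ C → B v w * f w = 0 := fun v hv w hw => by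
    rcases (hB v w).eq_or_lt with h | h
    · simp [← h]
    · rw [hfz w fun h' => hw (hexit v hv w h' (.single h)), mul_zero]
  have hh : IsHarmonic B f := by
    intro v
    by_cases hvC : v ∈ C
    · rw [hfC v hvC, ← hu v hvC]
      refine Finset.sum_congr rfl fun w _ => ?_
      by_cases hw : w ∈ C
      · rw [hfC w hw]
      · rw [hterm v hvC w hw, huz w hw, mul_zero]
    · by_cases hv : v ∈ closureSet B C
      · rw [hsplit, ← hx v ⟨hv, hvC⟩]
        simp [f, huz v hvC]
      · rw [hfz v hv]
        refine Finset.sum_eq_zero fun w _ => ?_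
        rcases (hB v w).eq_or_lt with h | h
        · simp [← h]
        · rw [hfz w fun h' => hv (hup v w (.single h) h'), mul_zero]
  have hpos : ∀ v ∈ closureSet B C, 0 < f v := fun v hv => by
    obtain ⟨w, hw, hvw⟩ := hv
    exact hs_prop B hB f hf0 w (by rw [hfC w hw]; exact hupos w hw) Set.univ
      (fun _ _ _ _ _ => Set.mem_univ _) (fun v _ => hh v) v ((hs_reach_iff B hB v w).1 hvw)
      (Set.mem_univ _)
  have hs : 0 < ∑ v, f v := by
    refine (hpos w0 (hsub hw0C)).trans_le ?_
    exact Finset.single_le_sum (fun v _ => hf0 v) (Finset.mem_univ w0)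
  have hh' : IsHarmonic B (fun v => f v / ∑ v, f v) := fun v => by
    simp only
    rw [← hh v, Finset.sum_div]
    exact Finset.sum_congr rfl fun w _ => by rw [mul_div_assoc]
  refine ⟨fun v => f v / ∑ v, f v, fun v => div_nonneg (hf0 v) hs.le, ?_, hh', ?_, ?_⟩
  · rw [← Finset.sum_div, div_self hs.ne']
  · intro v hv
    rw [← hh' v]
    refine Finset.sum_congr rfl fun w _ => ?_
    by_cases hw : w ∈ C
    · simp [hw]
    · rw [Set.indicator_of_notMem hw, ← mul_div_assoc, hterm v hv w hw, zero_div]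
  · intro v
    constructor
    · intro h
      by_contra hv
      simp [hfz v hv] at h
    · intro hv
      exact (div_pos (hpos v hv) hs).ne'

lemma hs_phiComp (B : Matrix V V ℝ) (hB : ∀ v w, 0 ≤ B v w) (C : Set V)
    (hC : IsHarmonicComponent B C) : IsPhiC B C (phiComp B C) := by
  have h := hs_exists B hB C hC
  unfold phiComp
  rw [dif_pos h]
  exact h.choose_spec

/-- The support of a harmonic vector contains the closure of a harmonic component. -/
lemma hs_find (B : Matrix V V ℝ) (hB : ∀ v w, 0 ≤ B v w) (ψ : V → ℝ)
    (hψ0 : ∀ v, 0 ≤ ψ v) (hψ1 : ∑ v, ψ v = 1) (hψ : IsHarmonic B ψ) :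
    ∃ C, IsHarmonicComponent B C ∧ ∀ v ∈ closureSet B C, 0 < ψ v := by
  classical
  have hne : {v | 0 < ψ v}.Nonempty := by
    by_contra h
    rw [Set.not_nonempty_iff_eq_empty] at h
    have : ∀ v, ψ v = 0 := fun v => by
      by_contra h'
      have : v ∈ {v | 0 < ψ v} := lt_of_le_of_ne (hψ0 v) (Ne.symm h')
      simp [h] at this
    simp [this] at hψ1
  have hpull : ∀ v w, hsR B v w → 0 < ψ w → 0 < ψ v := fun v w hvw hw =>
    hs_prop B hB ψ hψ0 w hw Set.univ (fun _ _ _ _ _ => Set.mem_univ _) (fun v _ => hψ v) v hvw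
      (Set.mem_univ _)
  obtain ⟨v0, hv0, hmin⟩ := Set.exists_min_image {v | 0 < ψ v}
    (fun v => {x | hsR B v x}.ncard) (Set.toFinite _) hne
  have hterm : ∀ w, 0 < ψ w → hsR B v0 w → hsR B w v0 := fun w hw hvw => by
    have hss : {x | hsR B w x} ⊆ {x | hsR B v0 x} := fun x hx => hvw.trans hx
    have heq := Set.eq_of_subset_of_ncard_le hss (hmin w hw) (Set.toFinite _)
    have : v0 ∈ {x | hsR B v0 x} := Relation.ReflTransGen.refl
    rw [← heq] at this
    exact this
  let C : Set V := {w | Reaches B v0 w ∧ Reaches B w v0}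
  have hm : ∀ w, w ∈ C ↔ hsR B v0 w ∧ hsR B w v0 := fun w => by
    simp [C, hs_reach_iff B hB]
  have hv0C : v0 ∈ C := (hm v0).2 ⟨.refl, .refl⟩
  have hcomp : IsComponent B C := by
    refine ⟨⟨v0, rfl⟩, v0, hv0C, ?_⟩
    have h1 : ∑ _w : V, (0:ℝ) < ∑ w, B v0 w * ψ w := by
      rw [hψ v0]; simpa using hv0
    obtain ⟨w, -, hw⟩ := Finset.exists_lt_of_sum_lt h1
    have hb : 0 < B v0 w := lt_of_le_of_ne (hB v0 w) fun h => by simp [← h] at hw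
    have hw' : 0 < ψ w := (pos_iff_pos_of_mul_pos hw).1 hb
    exact ⟨w, (hm w).2 ⟨.single hb, hterm w hw' (.single hb)⟩, hb.ne'⟩
  obtain ⟨-, hconn, hexit, hsub, hup⟩ := hs_comp B hB C hcomp
  have hcl : ∀ v ∈ closureSet B C, 0 < ψ v := fun v hv => by
    obtain ⟨w, hw, hvw⟩ := hv
    exact hpull v v0 (((hs_reach_iff B hB v w).1 hvw).trans ((hm w).1 hw).2) hv0
  refine ⟨C, ⟨hcomp, ?_, ?_⟩, hcl⟩
  · refine le_antisymm (hs_On_G3 B hB C ψ hψ0 (fun v hv => hcl v (hsub hv))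
      fun v _ => (hψ v).le) ?_
    by_contra! hlt
    have h0 := hs_On_L1 B C hlt (fun v => if v ∈ C then ψ v else 0)
      (fun v hv => by simp [hv]) (fun v hv => by
        simp only [hv, if_true]
        rw [← hψ v]
        refine Finset.sum_congr rfl fun w _ => ?_
        by_cases hw : w ∈ C
        · simp [hw]
        · rcases (hB v w).eq_or_lt with h | h
          · simp [← h]
          · have h2 : ψ w = 0 := by
              by_contra h'
              have h3 : 0 < ψ w := lt_of_le_of_ne (hψ0 w) (Ne.symm h')
              have h4 : hsR B v0 w := ((hm v).1 hv).1.tail h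
              exact hw ((hm w).2 ⟨h4, hterm w h3 h4⟩)
            simp [h2]) v0
    simp only [hv0C, if_true] at h0
    exact (ne_of_gt hv0) h0
  · intro hS
    set S := closureSet B C \ C with hSdef
    have hSpos : ∀ v ∈ S, 0 < ψ v := fun v hv => hcl v hv.1
    refine lt_of_le_of_ne (hs_On_G3 B hB S ψ hψ0 hSpos fun v _ => (hψ v).le) fun h1 => ?_
    obtain ⟨u, hu0, huz, ⟨w0, hw0⟩, hu⟩ := hs_On_L2 B hB S h1
    have hw0S : w0 ∈ S := by by_contra h; exact hw0 (huz w0 h)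
    obtain ⟨v1, hv1, hmax⟩ := Set.exists_max_image S (fun v => u v / ψ v) (Set.toFinite S) hS
    set t := u v1 / ψ v1 with ht
    have hv1t : u v1 = t * ψ v1 := by rw [ht, div_mul_cancel₀ _ (hSpos v1 hv1).ne']
    have ht0 : 0 < t := (div_pos (lt_of_le_of_ne (hu0 w0) hw0.symm) (hSpos w0 hw0S)).trans_le
      (hmax w0 hw0S)
    have hle : ∀ v, u v ≤ t * ψ v := fun v => by
      by_cases hv : v ∈ S
      · exact (div_le_iff₀ (hSpos v hv)).1 (hmax v hv)
      · rw [huz v hv]; exact mul_nonneg ht0.le (hψ0 v)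
    have key : ∀ v, hsR B v v0 → v ∈ S → u v = t * ψ v → False := by
      intro v h
      induction h using Relation.ReflTransGen.head_induction_on with
      | refl => exact fun h _ => h.2 hv0C
      | head h2 h3 ih =>
        rename_i a c
        intro ha hat
        have hz : ∑ w, B a w * (t * ψ w - u w) = 0 := by
          have : ∑ w, B a w * (t * ψ w - u w) = t * ∑ w, B a w * ψ w - ∑ w, B a w * u w := by
            rw [Finset.mul_sum, ← Finset.sum_sub_distrib]
            exact Finset.sum_congr rfl fun _ _ => by ring
          rw [this, hψ a, hu a ha, hat, sub_self]
        have hz' := (Finset.sum_eq_zero_iff_of_nonneg fun w _ =>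
          mul_nonneg (hB a w) (sub_nonneg.2 (hle w))).1 hz c (Finset.mem_univ c)
        have hc : u c = t * ψ c := by
          rcases mul_eq_zero.1 hz' with h | h
          · exact absurd h h2.ne'
          · linarith
        refine ih ?_ hc
        by_contra hcS
        rw [huz c hcS] at hc
        exact (mul_pos ht0 (hpull c v0 h3 hv0)).ne hc
    obtain ⟨w, hw, hvw⟩ := hv1.1
    exact key v1 (((hs_reach_iff B hB v1 w).1 hvw).trans ((hm w).1 hw).2) hv1 hv1t

end Main

/-- The normalized `B`-harmonic vectors form a convex set whose extreme points are exactly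
the vectors `φ^C` for `C` a `B`-harmonic component. -/
theorem harmonic_simplex {V : Type*} [Fintype V] [Nonempty V] [DecidableEq V]
    (B : Matrix V V ℝ) (hB : ∀ v w, 0 ≤ B v w) :
    Convex ℝ {ψ : V → ℝ | (∀ v, 0 ≤ ψ v) ∧ (∑ v, ψ v = 1) ∧ IsHarmonic B ψ} ∧
    Set.extremePoints ℝ {ψ : V → ℝ | (∀ v, 0 ≤ ψ v) ∧ (∑ v, ψ v = 1) ∧ IsHarmonic B ψ}
      = {φ : V → ℝ | ∃ C : Set V, IsHarmonicComponent B C ∧ φ = phiComp B C} := by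
  classical
  have hconv : Convex ℝ {ψ : V → ℝ | (∀ v, 0 ≤ ψ v) ∧ (∑ v, ψ v = 1) ∧ IsHarmonic B ψ} := by
    rintro x ⟨hx0, hx1, hx⟩ y ⟨hy0, hy1, hy⟩ a b ha hb hab
    refine ⟨fun v => ?_, ?_, fun v => ?_⟩
    · simp only [Pi.add_apply, Pi.smul_apply, smul_eq_mul]
      exact add_nonneg (mul_nonneg ha (hx0 v)) (mul_nonneg hb (hy0 v))
    · simp only [Pi.add_apply, Pi.smul_apply, smul_eq_mul]
      rw [Finset.sum_add_distrib, ← Finset.mul_sum, ← Finset.mul_sum, hx1, hy1]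
      linarith
    · simp only [Pi.add_apply, Pi.smul_apply, smul_eq_mul]
      rw [← hx v, ← hy v, Finset.mul_sum, Finset.mul_sum, ← Finset.sum_add_distrib]
      exact Finset.sum_congr rfl fun _ _ => by ring
  refine ⟨hconv, ?_⟩
  ext ψ
  constructor
  · rintro ⟨⟨hψ0, hψ1, hψ⟩, hext⟩
    obtain ⟨C, hC, hpos⟩ := hs_find B hB ψ hψ0 hψ1 hψ
    refine ⟨C, hC, ?_⟩
    obtain ⟨hφ0, hφ1, hφ, -, hφs⟩ := hs_phiComp B hB C hC
    set φ := phiComp B C with hφdef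
    -- a small multiple of `φ` lies below `ψ`
    have hle1 : ∀ v, φ v ≤ 1 := fun v => by
      rw [← hφ1]; exact Finset.single_le_sum (fun v _ => hφ0 v) (Finset.mem_univ v)
    obtain ⟨v0, -, hv0⟩ := Finset.exists_min_image (Finset.univ : Finset V)
      (fun v => if 0 < ψ v then ψ v else 1) Finset.univ_nonempty
    obtain ⟨ε, hε0, hε1, hε⟩ : ∃ ε : ℝ, 0 < ε ∧ ε < 1 ∧ ∀ v, 0 < ψ v → ε ≤ ψ v := by
      have hpos0 : (0:ℝ) < if 0 < ψ v0 then ψ v0 else 1 := by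
        split_ifs with h
        · exact h
        · exact one_pos
      refine ⟨min (1/2) (if 0 < ψ v0 then ψ v0 else 1), lt_min (by norm_num) hpos0,
        (min_le_left _ _).trans_lt (by norm_num), fun v hv => ?_⟩
      have := hv0 v (Finset.mem_univ v)
      simp only [hv, if_true] at this
      exact (min_le_right _ _).trans this
    have hle : ∀ v, ε * φ v ≤ ψ v := fun v => by
      by_cases hv : v ∈ closureSet B C
      · have h1 := hε v (hpos v hv)
        nlinarith [hle1 v]
      · have : φ v = 0 := by by_contra h; exact hv ((hφs v).1 h)
        rw [this, mul_zero]; exact hψ0 v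
    have h1ε : 0 < 1 - ε := by linarith
    have hmem2 : (fun v => (ψ v - ε * φ v) / (1 - ε)) ∈
        {ψ : V → ℝ | (∀ v, 0 ≤ ψ v) ∧ (∑ v, ψ v = 1) ∧ IsHarmonic B ψ} := by
      refine ⟨fun v => div_nonneg (by linarith [hle v]) h1ε.le, ?_, fun v => ?_⟩
      · rw [← Finset.sum_div, Finset.sum_sub_distrib, ← Finset.mul_sum, hψ1, hφ1, mul_one,
          div_self h1ε.ne']
      · simp only
        rw [← hψ v, ← hφ v, Finset.mul_sum, ← Finset.sum_sub_distrib, Finset.sum_div]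
        exact Finset.sum_congr rfl fun _ _ => by ring
    refine (hext (x₁ := φ) ⟨hφ0, hφ1, hφ⟩ hmem2 ⟨ε, 1 - ε, hε0, h1ε, by ring, ?_⟩).symm
    funext v
    simp only [Pi.add_apply, Pi.smul_apply, smul_eq_mul]
    field_simp
    ring
  · rintro ⟨C, hC, rfl⟩
    have hp := hs_phiComp B hB C hC
    refine ⟨⟨hp.1, hp.2.1, hp.2.2.1⟩, ?_⟩
    rintro x ⟨hx0, hx1, hx⟩ y ⟨hy0, hy1, hy⟩ ⟨a, b, ha, hb, hab, hxy⟩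
    refine hs_unique B hB C hC _ x hp hx0 hx1 hx fun v hv => ?_
    have hz : phiComp B C v = 0 := by by_contra h; exact hv ((hp.2.2.2.2 v).1 h)
    rw [← hxy] at hz
    simp only [Pi.add_apply, Pi.smul_apply, smul_eq_mul] at hz
    have h1 := mul_nonneg ha.le (hx0 v)
    have h2 := mul_nonneg hb.le (hy0 v)
    have h3 : a * x v = 0 := by linarith
    exact (mul_eq_zero.1 h3).resolve_left ha.ne'
end
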